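/- arXiv:2510.25171 — 12 statements merged into one kernel-verified Lean document; each statement's English description precedes it below -/
import Mathlib

section
/- Let n ≥ 1 and let φ : ℝⁿ → ℝ be positively 1-homogeneous, subadditive, with φ(y) > 0 for every y ≠ 0, and C^∞ on ℝⁿ \ {0}; set Ω := {x ∈ ℝⁿ : φ(x) < 1}. Then: (1) for every x ∈ Ω and every y ∈ ℝⁿ there exists a unique t ∈ ℝ with t = φ(y + t•x); denote this unique solution by Φ(x,y); (2) Φ(x,y) > 0 for all x ∈ Ω and y ≠ 0, and Φ(x,0) = 0; (3) the map (x,y) ↦ Φ(x,y) is C^∞ on Ω × (ℝⁿ \ {0}); (4) for each x ∈ Ω the function y ↦ Φ(x,y) is positively 1-homogeneous and subadditive, and it is regular whenever φ is regular; (5) for each x ∈ Ω one has {y ∈ ℝⁿ : Φ(x,y) < 1} = Ω − x := {z − x : z ∈ Ω}. -/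
/-- Global existence, uniqueness and properties of the solution `Φ` of the
Funk-type equation `Φ(x,y) = φ(y + Φ(x,y) • x)` for a (quasi-)regular positively
1-homogeneous function `φ` on `ℝⁿ`, on the domain `Ω = {φ < 1}`. -/
theorem stmt_0 (n : ℕ) (hn : 1 ≤ n)
    (φ : EuclideanSpace ℝ (Fin n) → ℝ)
    (hhom : ∀ α : ℝ, 0 < α → ∀ y, φ (α • y) = α * φ y)
    (hsub : ∀ y₁ y₂, φ (y₁ + y₂) ≤ φ y₁ + φ y₂)
    (hpos : ∀ y : EuclideanSpace ℝ (Fin n), y ≠ 0 → 0 < φ y)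
    (hsmooth : ContDiffOn ℝ (⊤ : ℕ∞) φ {y | y ≠ 0}) :
    ∃ Φ : EuclideanSpace ℝ (Fin n) → EuclideanSpace ℝ (Fin n) → ℝ,
      -- (1) `Φ x y` is the unique solution `t` of `t = φ(y + t • x)`
      (∀ x, φ x < 1 → ∀ y,
        Φ x y = φ (y + Φ x y • x) ∧ ∀ t : ℝ, t = φ (y + t • x) → t = Φ x y) ∧
      -- (2) positivity and vanishing at the origin
      (∀ x, φ x < 1 → (∀ y, y ≠ 0 → 0 < Φ x y) ∧ Φ x 0 = 0) ∧
      -- (3) smoothness on `Ω × (ℝⁿ \ {0})`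
      ContDiffOn ℝ (⊤ : ℕ∞)
        (fun p : EuclideanSpace ℝ (Fin n) × EuclideanSpace ℝ (Fin n) => Φ p.1 p.2)
        ({x | φ x < 1} ×ˢ {y | y ≠ 0}) ∧
      -- (4) homogeneity, subadditivity, regularity in `y`
      (∀ x, φ x < 1 →
        (∀ α : ℝ, 0 < α → ∀ y, Φ x (α • y) = α * Φ x y) ∧
        (∀ y₁ y₂, Φ x (y₁ + y₂) ≤ Φ x y₁ + Φ x y₂) ∧
        ((∀ y₁ y₂, φ (y₁ + y₂) = φ y₁ + φ y₂ →
            ∃ (v : EuclideanSpace ℝ (Fin n)) (a b : ℝ),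
              0 ≤ a ∧ 0 ≤ b ∧ y₁ = a • v ∧ y₂ = b • v) →
          ∀ y₁ y₂, Φ x (y₁ + y₂) = Φ x y₁ + Φ x y₂ →
            ∃ (v : EuclideanSpace ℝ (Fin n)) (a b : ℝ),
              0 ≤ a ∧ 0 ≤ b ∧ y₁ = a • v ∧ y₂ = b • v)) ∧
      -- (5) the unit level set of `Φ(x, ·)` is `Ω − x`
      (∀ x, φ x < 1 → {y | Φ x y < 1} = (fun z => z - x) '' {z | φ z < 1}) := by
  have h0 : φ 0 = 0 := by
    have := hhom 2 (by norm_num) 0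
    rw [smul_zero] at this
    linarith
  have hnn : ∀ y, 0 ≤ φ y := fun y => by
    by_cases h : y = 0
    · rw [h, h0]
    · exact (hpos y h).le
  have hhom0 : ∀ α : ℝ, 0 ≤ α → ∀ y, φ (α • y) = α * φ y := fun α hα y => by
    rcases hα.eq_or_lt with h | h
    · rw [← h]; simp [h0]
    · exact hhom α h y
  have hcont : Continuous φ := by
    have hc : ConvexOn ℝ Set.univ φ := by
      refine ⟨convex_univ, ?_⟩
      intro a _ b _ s t hs ht _
      have := hsub (s • a) (t • b)
      rw [hhom0 s hs, hhom0 t ht] at this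
      simpa using this
    exact hc.locallyLipschitz.continuous
  have hstep : ∀ x y (s t : ℝ), s ≤ t → φ (y + t • x) ≤ φ (y + s • x) + (t - s) * φ x := by
    intro x y s t hst
    have h1 := hsub (y + s • x) ((t - s) • x)
    rw [hhom0 _ (by linarith)] at h1
    have h2 : y + s • x + (t - s) • x = y + t • x := by module
    rwa [h2] at h1
  have hex : ∀ x, φ x < 1 → ∀ y, ∃ t : ℝ, t = φ (y + t • x) := by
    intro x hx y
    have hx' : 0 < 1 - φ x := by linarith
    set T := φ y / (1 - φ x) with hT
    have hT0 : 0 ≤ T := div_nonneg (hnn y) hx'.le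
    have hTe : T * (1 - φ x) = φ y := by rw [hT]; field_simp
    have hc : ContinuousOn (fun t : ℝ => t - φ (y + t • x)) (Set.Icc 0 T) := by
      apply Continuous.continuousOn; fun_prop
    have hm := intermediate_value_Icc hT0 hc
    have : (0 : ℝ) ∈ Set.Icc ((0 : ℝ) - φ (y + (0 : ℝ) • x)) (T - φ (y + T • x)) := by
      constructor
      · have := hnn (y + (0 : ℝ) • x); linarith
      · have := hstep x y 0 T hT0
        rw [zero_smul, add_zero] at this
        nlinarith
    obtain ⟨t, _, ht⟩ := hm this
    exact ⟨t, by simp only at ht; linarith⟩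
  have hle : ∀ x, φ x < 1 → ∀ y (t s : ℝ), t = φ (y + t • x) → φ (y + s • x) ≤ s → t ≤ s := by
    intro x hx y t s ht hs
    by_contra! hlt
    have := hstep x y s t hlt.le
    nlinarith
  have huniq : ∀ x, φ x < 1 → ∀ y (t s : ℝ), t = φ (y + t • x) → s = φ (y + s • x) → t = s :=
    fun x hx y t s ht hs => le_antisymm (hle x hx y t s ht hs.ge) (hle x hx y s t hs ht.ge)
  choose! Φ hΦ using hex
  have hp : ∀ x, φ x < 1 → ∀ y, y ≠ 0 → 0 < Φ x y := by
    intro x hx y hy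
    have h1 := hΦ x hx y
    have h2 := hnn (y + Φ x y • x)
    rcases (h1 ▸ h2 : 0 ≤ Φ x y).eq_or_lt with h | h
    · rw [← h, zero_smul, add_zero] at h1
      exact absurd h1 (hpos y hy).ne
    · exact h
  refine ⟨Φ, fun x hx y => ⟨hΦ x hx y, fun t ht => huniq x hx y t _ ht (hΦ x hx y)⟩,
    fun x hx => ⟨hp x hx, huniq x hx 0 _ _ (hΦ x hx 0) (by simp [h0])⟩, ?_, ?_, ?_⟩
  · rintro ⟨x, y⟩ ⟨hx, hy⟩
    simp only [Set.mem_ofPred_eq] at hx hy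
    apply ContDiffAt.contDiffWithinAt
    set t := Φ x y with htd
    have ht : t = φ (y + t • x) := hΦ x hx y
    have ht0 : 0 < t := hp x hx y hy
    have hz : y + t • x ≠ 0 := by
      intro h
      rw [h, h0] at ht
      exact ht0.ne' ht
    let F : (EuclideanSpace ℝ (Fin n) × EuclideanSpace ℝ (Fin n)) × ℝ → ℝ :=
      fun q => q.2 - φ (q.1.2 + q.2 • q.1.1)
    have hφz : ContDiffAt ℝ (⊤ : ℕ∞) φ (y + t • x) :=
      hsmooth.contDiffAt (isOpen_ne.mem_nhds hz)
    have hF : ContDiffAt ℝ (⊤ : ℕ∞) F ((x, y), t) := by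
      apply ContDiffAt.sub contDiffAt_snd
      apply ContDiffAt.comp ((x, y), t) (g := φ) hφz
      fun_prop
    have hne : ((⊤ : ℕ∞) : WithTop ℕ∞) ≠ 0 := by simp
    set c := fderiv ℝ F ((x, y), t) (0, 1) with hc
    have hcpos : 0 < c := by
      have hd : HasFDerivAt F (fderiv ℝ F ((x, y), t)) ((x, y), t) :=
        (hF.differentiableAt hne).hasFDerivAt
      have hd2 : HasDerivAt (fun s : ℝ => (((x, y), s) :
          (EuclideanSpace ℝ (Fin n) × EuclideanSpace ℝ (Fin n)) × ℝ)) (0, 1) t :=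
        (hasDerivAt_const t (x, y)).prodMk (hasDerivAt_id t)
      have hd3 : HasDerivAt (fun s : ℝ => F ((x, y), s)) c t := hd.comp_hasDerivAt t hd2
      have hd4 : HasDerivAt (fun s : ℝ => F ((x, y), s) - s * (1 - φ x)) (c - 1 * (1 - φ x)) t :=
        hd3.sub ((hasDerivAt_id t).mul_const _)
      have hm : Monotone (fun s : ℝ => F ((x, y), s) - s * (1 - φ x)) := by
        intro a b hab
        have := hstep x y a b hab
        simp only [F]
        linarith
      have := hm.deriv_nonneg (x := t)
      rw [hd4.deriv] at this
      linarith
    have hinv : (fderiv ℝ F ((x, y), t) ∘L ContinuousLinearMap.inr ℝ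
        (EuclideanSpace ℝ (Fin n) × EuclideanSpace ℝ (Fin n)) ℝ).IsInvertible := by
      refine ⟨ContinuousLinearEquiv.unitsEquivAut ℝ (Units.mk0 c hcpos.ne'), ?_⟩
      ext
      simp [hc]
    have hs := hF.contDiffAt_implicitFunction hne hinv
    have he := hF.eventually_apply_implicitFunction hne hinv
    refine hs.congr_of_eventuallyEq ?_
    have hop : ∀ᶠ p : EuclideanSpace ℝ (Fin n) × EuclideanSpace ℝ (Fin n) in nhds (x, y),
        φ p.1 < 1 :=
      (isOpen_lt (hcont.comp continuous_fst) continuous_const).mem_nhds hx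
    filter_upwards [he, hop] with p h1 h2
    refine huniq p.1 h2 p.2 _ _ (hΦ p.1 h2 p.2) ?_
    simp only [F] at h1
    linarith
  · intro x hx
    refine ⟨?_, ?_, ?_⟩
    · intro α hα y
      refine huniq x hx _ _ _ (hΦ x hx _) ?_
      have : α • y + (α * Φ x y) • x = α • (y + Φ x y • x) := by module
      rw [this, hhom α hα, ← hΦ x hx y]
    · intro y₁ y₂
      refine hle x hx _ _ _ (hΦ x hx _) ?_
      have : y₁ + y₂ + (Φ x y₁ + Φ x y₂) • x = (y₁ + Φ x y₁ • x) + (y₂ + Φ x y₂ • x) := by module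
      rw [this]
      refine (hsub _ _).trans ?_
      rw [← hΦ x hx y₁, ← hΦ x hx y₂]
    · intro hreg y₁ y₂ heq
      have h1 := hΦ x hx (y₁ + y₂)
      have : y₁ + y₂ + (Φ x y₁ + Φ x y₂) • x = (y₁ + Φ x y₁ • x) + (y₂ + Φ x y₂ • x) := by module
      rw [heq, this] at h1
      obtain ⟨v, a, b, ha, hb, hav, hbv⟩ := hreg (y₁ + Φ x y₁ • x) (y₂ + Φ x y₂ • x)
        (by rw [← h1, ← hΦ x hx y₁, ← hΦ x hx y₂])
      refine ⟨v - φ v • x, a, b, ha, hb, ?_, ?_⟩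
      · have e := hΦ x hx y₁
        rw [hav, hhom0 a ha] at e
        rw [e] at hav
        rw [eq_sub_of_add_eq hav]; module
      · have e := hΦ x hx y₂
        rw [hbv, hhom0 b hb] at e
        rw [e] at hbv
        rw [eq_sub_of_add_eq hbv]; module
  · intro x hx
    ext y
    simp only [Set.mem_ofPred_eq, Set.mem_image]
    have e := hΦ x hx y
    constructor
    · intro h
      refine ⟨y + x, ?_, by simp⟩
      have := hstep x y _ 1 h.le
      rw [one_smul] at this
      nlinarith
    · rintro ⟨z, hz, rfl⟩
      by_contra! h
      have := hstep x (z - x) 1 _ h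
      rw [one_smul, sub_add_cancel] at this
      nlinarith
end

section
/- Let φ : ℝⁿ → ℝ be positively 1-homogeneous, let S ⊆ ℝⁿ, and let Φ : S × ℝⁿ → ℝ be any function satisfying Φ(x,y) = φ(y + Φ(x,y)•x) for all (x,y) ∈ S × ℝⁿ. Then: (i) if φ(y) > 0 for every y ≠ 0, then every x ∈ S satisfies 0 ≤ φ(x) < 1, i.e. S ⊆ {x : 0 ≤ φ(x) < 1}; (ii) if φ(y) < 0 for every y ≠ 0, then every x ∈ S satisfies −1 < φ(−x) ≤ 0, i.e. S ⊆ {x : −1 < φ(−x) ≤ 0}. (In particular this applies to any connected component, containing the origin, of the set of points x at which the equation Φ(x,y) = φ(y + x·Φ(x,y)) admits a solution for every y.) -/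
/-- Constraints on the domain of definition of a solution of the
Funk-type equation: if `Φ(x,y) = φ(y + Φ(x,y)•x)` for all `x ∈ S` and all `y`, then
`S ⊆ {0 ≤ φ < 1}` when `φ` is positive away from `0`, and `S ⊆ {−1 < φ(−·) ≤ 0}` when
`φ` is negative away from `0`. -/
theorem stmt_4 (n : ℕ) (hn : 1 ≤ n)
    (φ : EuclideanSpace ℝ (Fin n) → ℝ)
    (hhom : ∀ α : ℝ, 0 < α → ∀ y, φ (α • y) = α * φ y)
    (S : Set (EuclideanSpace ℝ (Fin n)))
    (Φ : EuclideanSpace ℝ (Fin n) → EuclideanSpace ℝ (Fin n) → ℝ)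
    (hΦ : ∀ x ∈ S, ∀ y, Φ x y = φ (y + Φ x y • x)) :
    ((∀ y : EuclideanSpace ℝ (Fin n), y ≠ 0 → 0 < φ y) →
      ∀ x ∈ S, 0 ≤ φ x ∧ φ x < 1) ∧
    ((∀ y : EuclideanSpace ℝ (Fin n), y ≠ 0 → φ y < 0) →
      ∀ x ∈ S, -1 < φ (-x) ∧ φ (-x) ≤ 0) := by
  have h0 : φ 0 = 0 := by
    have := hhom 2 (by norm_num) 0
    rw [smul_zero] at this
    linarith
  constructor
  · intro hp x hx
    have hnn : ∀ y, 0 ≤ φ y := by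
      intro y
      by_cases hy : y = 0
      · rw [hy, h0]
      · exact (hp y hy).le
    refine ⟨hnn x, ?_⟩
    have h1 := hΦ x hx x
    have h2 : 0 ≤ Φ x x := by rw [h1]; exact hnn _
    generalize Φ x x = t at h1 h2
    have h3 : x + t • x = (1 + t) • x := by rw [add_smul, one_smul]
    rw [h3, hhom _ (by linarith)] at h1
    by_contra hc
    nlinarith
  · intro hp x hx
    have hnn : ∀ y, φ y ≤ 0 := by
      intro y
      by_cases hy : y = 0
      · rw [hy, h0]
      · exact (hp y hy).le
    refine ⟨?_, hnn (-x)⟩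
    have h1 := hΦ x hx (-x)
    have h2 : Φ x (-x) ≤ 0 := by rw [h1]; exact hnn _
    generalize Φ x (-x) = t at h1 h2
    have h3 : -x + t • x = (1 - t) • (-x) := by
      rw [sub_smul, one_smul, smul_neg, sub_neg_eq_add]
    rw [h3, hhom _ (by linarith)] at h1
    by_contra hc
    nlinarith
end

section
/- Let φ : ℝⁿ → ℝ be positively 1-homogeneous with φ(y) > 0 for every y ≠ 0, let x ∈ ℝⁿ satisfy φ(x) < 1, and let y ∈ ℝⁿ \ {0}. Define S := {ζ ∈ ℝ : ζ = φ(y + ζ•x)} and I := {p ∈ ℝⁿ : φ(p) = 1 and p = x + k•y for some k ≥ 0}. Then every element of S is positive, the map ζ ↦ x + ζ⁻¹•y is a bijection from S onto I, and in particular S and I have the same cardinality. -/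
/-- The solutions `ζ` of `ζ = φ(y + ζ•x)` are positive and correspond
bijectively, via `ζ ↦ x + ζ⁻¹•y`, to the intersection points of the ray from `x` in the
direction `y` with the indicatrix `φ⁻¹(1)`; in particular the two sets have the same
cardinality. -/
theorem stmt_5 (n : ℕ) (hn : 1 ≤ n)
    (φ : EuclideanSpace ℝ (Fin n) → ℝ)
    (hhom : ∀ α : ℝ, 0 < α → ∀ y, φ (α • y) = α * φ y)
    (hpos : ∀ y : EuclideanSpace ℝ (Fin n), y ≠ 0 → 0 < φ y)
    (x y : EuclideanSpace ℝ (Fin n)) (hx : φ x < 1) (hy : y ≠ 0) :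
    (∀ ζ ∈ {ζ : ℝ | ζ = φ (y + ζ • x)}, 0 < ζ) ∧
    Set.BijOn (fun ζ : ℝ => x + ζ⁻¹ • y)
      {ζ : ℝ | ζ = φ (y + ζ • x)}
      {p : EuclideanSpace ℝ (Fin n) | φ p = 1 ∧ ∃ k : ℝ, 0 ≤ k ∧ p = x + k • y} ∧
    Cardinal.mk {ζ : ℝ | ζ = φ (y + ζ • x)} =
      Cardinal.mk {p : EuclideanSpace ℝ (Fin n) | φ p = 1 ∧ ∃ k : ℝ, 0 ≤ k ∧ p = x + k • y} := by
  have h0 : φ 0 = 0 := by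
    have h := hhom 2 (by norm_num) 0
    rw [smul_zero] at h
    linarith
  have hP : ∀ ζ ∈ {ζ : ℝ | ζ = φ (y + ζ • x)}, 0 < ζ := by
    intro ζ hζ
    rw [Set.mem_setOf_eq] at hζ
    by_cases h : y + ζ • x = 0
    · rw [h, h0] at hζ
      rw [hζ, zero_smul, add_zero] at h
      exact absurd h hy
    · rw [hζ]
      exact hpos _ h
  have hB : Set.BijOn (fun ζ : ℝ => x + ζ⁻¹ • y)
      {ζ : ℝ | ζ = φ (y + ζ • x)}
      {p : EuclideanSpace ℝ (Fin n) | φ p = 1 ∧ ∃ k : ℝ, 0 ≤ k ∧ p = x + k • y} := by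
    refine ⟨?_, ?_, ?_⟩
    · intro ζ hζ
      have hp := hP ζ hζ
      rw [Set.mem_setOf_eq] at hζ
      refine ⟨?_, ζ⁻¹, (inv_pos.mpr hp).le, rfl⟩
      have e : x + ζ⁻¹ • y = ζ⁻¹ • (y + ζ • x) := by
        rw [smul_add, smul_smul, inv_mul_cancel₀ hp.ne', one_smul, add_comm]
      show φ (x + ζ⁻¹ • y) = 1
      rw [e, hhom _ (inv_pos.mpr hp), ← hζ, inv_mul_cancel₀ hp.ne']
    · intro a _ b _ hab
      have h1 : a⁻¹ • y = b⁻¹ • y := add_left_cancel hab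
      exact inv_injective (smul_left_injective ℝ hy h1)
    · rintro p ⟨hp, k, hk, rfl⟩
      have hk' : 0 < k := by
        rcases hk.lt_or_eq with h | h
        · exact h
        · rw [← h, zero_smul, add_zero] at hp
          linarith
      refine ⟨k⁻¹, ?_, ?_⟩
      · have e : y + k⁻¹ • x = k⁻¹ • (x + k • y) := by
          rw [smul_add, smul_smul, inv_mul_cancel₀ hk'.ne', one_smul, add_comm]
        rw [Set.mem_setOf_eq, e, hhom _ (inv_pos.mpr hk'), hp, mul_one]
      · simp
  exact ⟨hP, hB, Cardinal.mk_congr (Set.BijOn.equiv _ hB)⟩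
end

section
/- Let Ω ⊆ ℝⁿ be a nonempty open convex set and let d be a projectively flat asymmetric metric on Ω. Then the following are equivalent: (A) there exists a pseudo-norm function F on Ω satisfying the weak Lipschitz condition such that F induces d; (B) for every x ∈ Ω there exist constants r > 0, c > 0, C > 0 with the open Euclidean ball B(x,r) contained in Ω such that for all x₁, x₂ ∈ B(x,r) and all y ∈ ℝⁿ with x₁ + y ∈ B(x,r) and x₂ + y ∈ B(x,r) one has c·‖x₂ − x₁‖ ≤ d(x₁,x₂) ≤ C·‖x₂ − x₁‖ and |d(x₁, x₁ + y) − d(x₂, x₂ + y)| ≤ C·‖y‖·‖x₂ − x₁‖. Moreover, when these hold, for any such inducing pseudo-norm function F: d is C^∞ on {(x₁,x₂) ∈ Ω × Ω : x₁ ≠ x₂} if and only if F is C^∞ on Ω × (ℝⁿ \ {0}). -/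
open scoped ENNReal

noncomputable section

/-- The `d`-length of a curve `γ : ℝ → ℝⁿ` over `[0,1]`: the supremum, over all finite
partitions `0 = t₀ < t₁ < ⋯ < t_N = 1`, of `∑ d(γ(t_{i−1}), γ(t_i))`, valued in `[0,∞]`. -/
def dLength (n : ℕ) (d : EuclideanSpace ℝ (Fin n) → EuclideanSpace ℝ (Fin n) → ℝ)
    (γ : ℝ → EuclideanSpace ℝ (Fin n)) : ℝ≥0∞ :=
  sSup {s : ℝ≥0∞ | ∃ (N : ℕ) (t : Fin (N + 1) → ℝ), StrictMono t ∧ t 0 = 0 ∧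
    t (Fin.last N) = 1 ∧
    s = ∑ i : Fin N, ENNReal.ofReal (d (γ (t i.castSucc)) (γ (t i.succ)))}

/-- An asymmetric metric on `Ω`: continuous, nonnegative and vanishing exactly on the
diagonal, satisfying the triangle inequality. -/
def IsAsymmetricMetric (n : ℕ) (Ω : Set (EuclideanSpace ℝ (Fin n)))
    (d : EuclideanSpace ℝ (Fin n) → EuclideanSpace ℝ (Fin n) → ℝ) : Prop :=
  ContinuousOn (fun p : EuclideanSpace ℝ (Fin n) × EuclideanSpace ℝ (Fin n) => d p.1 p.2)
    (Ω ×ˢ Ω) ∧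
  (∀ x₁ ∈ Ω, ∀ x₂ ∈ Ω, 0 ≤ d x₁ x₂ ∧ (d x₁ x₂ = 0 ↔ x₁ = x₂)) ∧
  (∀ x₁ ∈ Ω, ∀ x₂ ∈ Ω, ∀ x₃ ∈ Ω, d x₁ x₃ ≤ d x₁ x₂ + d x₂ x₃)

/-- `d` is projectively flat on `Ω`: the `d`-length of the straight segment from `x₁` to
`x₂` equals `d(x₁,x₂)`. -/
def IsProjFlatMetric (n : ℕ) (Ω : Set (EuclideanSpace ℝ (Fin n)))
    (d : EuclideanSpace ℝ (Fin n) → EuclideanSpace ℝ (Fin n) → ℝ) : Prop :=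
  ∀ x₁ ∈ Ω, ∀ x₂ ∈ Ω,
    ENNReal.ofReal (d x₁ x₂) = dLength n d (fun t : ℝ => (1 - t) • x₁ + t • x₂)

/-- A pseudo-norm function on `Ω`: continuous in both variables, and for each `x ∈ Ω` the
function `F(x, ·)` is nonnegative (vanishing only at `0`), positively 1-homogeneous and
subadditive. -/
def IsPseudoNormFunction (n : ℕ) (Ω : Set (EuclideanSpace ℝ (Fin n)))
    (F : EuclideanSpace ℝ (Fin n) → EuclideanSpace ℝ (Fin n) → ℝ) : Prop :=
  ContinuousOn (fun p : EuclideanSpace ℝ (Fin n) × EuclideanSpace ℝ (Fin n) => F p.1 p.2)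
    (Ω ×ˢ (Set.univ : Set (EuclideanSpace ℝ (Fin n)))) ∧
  ∀ x ∈ Ω,
    (∀ y, 0 ≤ F x y ∧ (F x y = 0 ↔ y = 0)) ∧
    (∀ α : ℝ, 0 < α → ∀ y, F x (α • y) = α * F x y) ∧
    (∀ y₁ y₂, F x (y₁ + y₂) ≤ F x y₁ + F x y₂)

/-- A curve `γ : ℝ → ℝⁿ` is piecewise `C¹` on `[0,1]` if there is a partition
`0 = s₀ < s₁ < ⋯ < s_k = 1` with `γ` continuously differentiable on each `[s_{i−1}, s_i]`. -/
def PiecewiseC1 (n : ℕ) (γ : ℝ → EuclideanSpace ℝ (Fin n)) : Prop :=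
  ∃ (k : ℕ) (s : Fin (k + 1) → ℝ), StrictMono s ∧ s 0 = 0 ∧ s (Fin.last k) = 1 ∧
    ∀ i : Fin k, ContDiffOn ℝ 1 γ (Set.Icc (s i.castSucc) (s i.succ))

/-- `F` induces `d`: `d(x₁,x₂)` is the infimum of `∫₀¹ F(γ(t), γ′(t)) dt` over all
piecewise `C¹` curves in `Ω` from `x₁` to `x₂`. -/
def InducesDist (n : ℕ) (Ω : Set (EuclideanSpace ℝ (Fin n)))
    (F : EuclideanSpace ℝ (Fin n) → EuclideanSpace ℝ (Fin n) → ℝ)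
    (d : EuclideanSpace ℝ (Fin n) → EuclideanSpace ℝ (Fin n) → ℝ) : Prop :=
  ∀ x₁ ∈ Ω, ∀ x₂ ∈ Ω,
    d x₁ x₂ = sInf {L : ℝ | ∃ γ : ℝ → EuclideanSpace ℝ (Fin n), PiecewiseC1 n γ ∧
      (∀ t ∈ Set.Icc (0 : ℝ) 1, γ t ∈ Ω) ∧ γ 0 = x₁ ∧ γ 1 = x₂ ∧
      L = ∫ t in (0 : ℝ)..1, F (γ t) (deriv γ t)}

/-- The weak Lipschitz condition of Busemann–Mayer for a pseudo-norm function. -/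
def WeakLipschitz (n : ℕ) (Ω : Set (EuclideanSpace ℝ (Fin n)))
    (F : EuclideanSpace ℝ (Fin n) → EuclideanSpace ℝ (Fin n) → ℝ) : Prop :=
  ∀ x ∈ Ω, ∃ U ∈ nhds x, U ⊆ Ω ∧ ∃ C : ℝ, 0 < C ∧
    ∀ x₁ ∈ U, ∀ x₂ ∈ U, ∀ y, |F x₁ y - F x₂ y| ≤ C * ‖y‖ * ‖x₁ - x₂‖


section Helpers

open Set Filter Topology MeasureTheory

lemma param_hasFDerivAt {H V : Type} [NormedAddCommGroup H] [NormedSpace ℝ H]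
    [NormedAddCommGroup V] [NormedSpace ℝ V]
    (W : Set (H × ℝ)) (hW : IsOpen W) (G : H × ℝ → V) (hG : ContDiffOn ℝ (⊤ : ℕ∞) G W)
    (p : H) (hp : ∀ t ∈ Icc (0:ℝ) 1, (p, t) ∈ W) :
    HasFDerivAt (fun q => ∫ t in (0:ℝ)..1, G (q, t))
      (∫ t in (0:ℝ)..1, (fderiv ℝ G (p, t)).comp (ContinuousLinearMap.inl ℝ H ℝ)) p := by
  have hcd : ContinuousOn (fderiv ℝ G) W :=
    hG.continuousOn_fderiv_of_isOpen hW (by exact_mod_cast le_top)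
  have hcG : ContinuousOn G W := hG.continuousOn
  set G' : H × ℝ → H →L[ℝ] V := fun q => (fderiv ℝ G q).comp (ContinuousLinearMap.inl ℝ H ℝ) with hG'
  have hcG' : ContinuousOn G' W := hcd.clm_comp continuousOn_const
  have hmap : ∀ q : H, (∀ t ∈ Icc (0:ℝ) 1, (q, t) ∈ W) →
      MapsTo (fun t : ℝ => (q, t)) (Icc 0 1) W := fun q hq t ht => hq t ht
  have hpc : ∀ q : H, ContinuousOn (fun t : ℝ => (q, t)) (Icc 0 1) := fun q => by fun_prop
  obtain ⟨M, hM⟩ := isCompact_Icc.exists_bound_of_continuousOn (hcG'.comp (hpc p) (hmap p hp))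
  have hnear : ∀ᶠ q in 𝓝 p, ∀ t ∈ Icc (0:ℝ) 1, (q, t) ∈ W ∧ ‖G' (q, t)‖ ≤ M + 1 := by
    apply isCompact_Icc.eventually_forall_of_forall_eventually
    intro t ht
    have h1 : ∀ᶠ z in 𝓝 (p, t), z ∈ W := hW.mem_nhds (hp t ht)
    have h2 : ∀ᶠ z in 𝓝 (p, t), ‖G' z‖ < M + 1 := by
      have := ((hcG' _ (hp t ht)).continuousAt (hW.mem_nhds (hp t ht))).norm
      apply this.eventually_lt_const
      have := hM t ht
      simp only [Function.comp] at this
      linarith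
    filter_upwards [h1, h2] with z hz1 hz2 using ⟨hz1, hz2.le⟩
  have hu : uIoc (0:ℝ) 1 ⊆ Icc 0 1 := by rw [uIoc_of_le zero_le_one]; exact Ioc_subset_Icc_self
  have hint : ∀ {V' : Type} [NormedAddCommGroup V'] (f : H × ℝ → V') (q : H), ContinuousOn f W →
      (∀ t ∈ Icc (0:ℝ) 1, (q, t) ∈ W) → IntervalIntegrable (fun t => f (q, t)) volume 0 1 := by
    intro V' _ f q hf hq
    apply ContinuousOn.intervalIntegrable
    rw [uIcc_of_le zero_le_one]
    exact hf.comp (hpc q) (hmap q hq)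
  apply intervalIntegral.hasFDerivAt_integral_of_dominated_of_fderiv_le (F' := fun q t => G' (q, t))
    (bound := fun _ => M + 1) hnear
  · filter_upwards [hnear] with q hq
    exact (hint G q hcG fun t ht => (hq t ht).1).def'.aestronglyMeasurable
  · exact hint G p hcG hp
  · exact (hint G' p hcG' hp).def'.aestronglyMeasurable
  · exact Eventually.of_forall fun t ht q hq => (hq t (hu ht)).2
  · exact intervalIntegrable_const
  · refine Eventually.of_forall fun t ht q hq => ?_
    have hqW := (hq t (hu ht)).1
    have h1 : HasFDerivAt G (fderiv ℝ G (q, t)) (q, t) :=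
      ((hG.differentiableOn (by simp)).differentiableAt (hW.mem_nhds hqW)).hasFDerivAt
    exact h1.comp q (hasFDerivAt_prodMk_left q t)

lemma param_contDiffOn {H : Type} [NormedAddCommGroup H] [NormedSpace ℝ H]
    (W : Set (H × ℝ)) (hW : IsOpen W) (U : Set H) (hU : IsOpen U)
    (hUW : ∀ p ∈ U, ∀ t ∈ Icc (0:ℝ) 1, (p, t) ∈ W) (k : ℕ) :
    ∀ {V : Type} [NormedAddCommGroup V] [NormedSpace ℝ V] (G : H × ℝ → V),
    ContDiffOn ℝ (⊤ : ℕ∞) G W →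
    ContDiffOn ℝ k (fun q => ∫ t in (0:ℝ)..1, G (q, t)) U := by
  induction k with
  | zero =>
    intro V _ _ G hG
    simp only [Nat.cast_zero, contDiffOn_zero]
    intro p hp
    exact (param_hasFDerivAt W hW G hG p (hUW p hp)).continuousAt.continuousWithinAt
  | succ k ih =>
    intro V _ _ G hG
    rw [Nat.cast_succ, contDiffOn_succ_iff_fderiv_of_isOpen hU]
    refine ⟨fun p hp => (param_hasFDerivAt W hW G hG p
      (hUW p hp)).differentiableAt.differentiableWithinAt, by simp, ?_⟩
    refine ContDiffOn.congr (ih (fun q => (fderiv ℝ G q).comp (ContinuousLinearMap.inl ℝ H ℝ)) ?_)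
      fun p hp => (param_hasFDerivAt W hW G hG p (hUW p hp)).fderiv
    exact (((contDiffOn_infty_iff_fderiv_of_isOpen hW).1 hG).2).clm_comp contDiffOn_const

lemma piece_le {E : Type} [NormedAddCommGroup E] [NormedSpace ℝ E] {Ω : Set E}
    {F : E → E → ℝ} (hF : ContinuousOn (fun p : E × E => F p.1 p.2) (Ω ×ˢ univ))
    {P : E → ℝ} (hP : ContinuousOn P Ω)
    (hPF : ∀ z ∈ Ω, ∀ v : E, ∀ ε > 0, ∀ᶠ p : ℝ × E in 𝓝[>] 0 ×ˢ 𝓝 v,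
      P (z + p.1 • p.2) - P z ≤ p.1 * (F z v + ε))
    {γ : ℝ → E} {a b : ℝ} (hab : a < b) (hγ : ContDiffOn ℝ 1 γ (Icc a b))
    (hγΩ : ∀ t ∈ Icc a b, γ t ∈ Ω) :
    IntervalIntegrable (fun t => F (γ t) (deriv γ t)) volume a b ∧
    P (γ b) - P (γ a) ≤ ∫ t in a..b, F (γ t) (deriv γ t) := by
  set g : ℝ → ℝ := fun t => F (γ t) (derivWithin γ (Icc a b) t) with hg
  have hdc : ContinuousOn (derivWithin γ (Icc a b)) (Icc a b) :=
    hγ.continuousOn_derivWithin (uniqueDiffOn_Icc hab) le_rfl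
  have hgc : ContinuousOn g (Icc a b) :=
    hF.comp (hγ.continuousOn.prodMk hdc) (fun t ht => ⟨hγΩ t ht, mem_univ _⟩)
  have hcongr : ∀ t ∈ Ioo a b, g t = F (γ t) (deriv γ t) := by
    intro t ht
    simp only [hg]
    rw [derivWithin_of_mem_nhds (Icc_mem_nhds ht.1 ht.2)]
  have hgi : IntervalIntegrable g volume a b := by
    apply ContinuousOn.intervalIntegrable
    rwa [uIcc_of_le hab.le]
  have hae : g =ᵐ[volume.restrict (uIoc a b)] fun t => F (γ t) (deriv γ t) := by
    rw [uIoc_of_le hab.le, ← restrict_Ioo_eq_restrict_Ioc]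
    exact (ae_restrict_iff' measurableSet_Ioo).2 (Eventually.of_forall hcongr)
  refine ⟨hgi.congr_ae hae, ?_⟩
  have hIeq : ∫ t in a..b, F (γ t) (deriv γ t) = ∫ t in a..b, g t := by
    apply intervalIntegral.integral_congr_ae_restrict hae.symm
  rw [hIeq]
  set G : ℝ → ℝ := IccExtend hab.le ((Icc a b).domRestrict g) with hG
  have hGc : Continuous G := (continuousOn_iff_continuous_domRestrict.1 hgc).Icc_extend'
  have hGg : ∀ t ∈ Icc a b, G t = g t := fun t ht => by
    simp only [hG]; rw [IccExtend_of_mem _ _ ht]; rfl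
  have hIeq2 : ∫ t in a..b, g t = ∫ t in a..b, G t := by
    apply intervalIntegral.integral_congr
    intro t ht
    rw [uIcc_of_le hab.le] at ht
    exact (hGg t ht).symm
  rw [hIeq2]
  have key := image_le_of_liminf_slope_right_le_deriv_boundary (f := fun t => P (γ t)) (a := a)
    (b := b) (B := fun t => P (γ a) + ∫ s in a..t, G s) (B' := G)
    (hP.comp hγ.continuousOn hγΩ) (by simp)
    (Continuous.continuousOn (continuous_const.add
      (intervalIntegral.continuous_primitive (fun _ _ => hGc.intervalIntegrable _ _) a)))
    (fun x _ => ((intervalIntegral.integral_hasDerivAt_right (hGc.intervalIntegrable _ _)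
      hGc.aestronglyMeasurable.stronglyMeasurableAtFilter hGc.continuousAt).const_add _).hasDerivWithinAt) ?_
  · have := key (right_mem_Icc.2 hab.le)
    linarith
  · intro x hx r hr
    apply Eventually.frequently
    have hxI : x ∈ Icc a b := Ico_subset_Icc_self hx
    rw [hGg x hxI] at hr
    simp only [hg] at hr
    set v := derivWithin γ (Icc a b) x with hv
    have hd0 : HasDerivWithinAt γ v (Icc a b) x :=
      ((hγ.differentiableOn (by simp)) x hxI).hasDerivWithinAt
    have hd1 : HasDerivWithinAt γ v (Ioi x) x := by
      have h2 : HasDerivWithinAt γ v (Ioc x b) x := hd0.mono (fun t ht => ⟨hx.1.trans ht.1.le, ht.2⟩)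
      exact h2.mono_of_mem_nhdsWithin (Ioc_mem_nhdsGT hx.2)
    have hsl : Tendsto (slope γ x) (𝓝[>] x) (𝓝 v) :=
      (hasDerivWithinAt_iff_tendsto_slope' (by simp)).1 hd1
    have hh : Tendsto (fun z => z - x) (𝓝[>] x) (𝓝[>] 0) := by
      apply tendsto_nhdsWithin_of_tendsto_nhds_of_eventually_within
      · have : Tendsto (fun z => z - x) (𝓝 x) (𝓝 (x - x)) := by
          exact (continuous_id.sub continuous_const).tendsto x
        rw [sub_self] at this
        exact this.mono_left nhdsWithin_le_nhds
      · filter_upwards [self_mem_nhdsWithin] with z hz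
        simpa using hz
    have h3 := (hh.prodMk hsl).eventually
      (hPF (γ x) (hγΩ x hxI) v ((r - F (γ x) v) / 2) (by linarith))
    filter_upwards [h3, self_mem_nhdsWithin] with z hz hzx
    have hzx' : 0 < z - x := sub_pos.2 hzx
    have e : γ x + (z - x) • slope γ x z = γ z := by
      rw [sub_smul_slope]; simp
    simp only [e] at hz
    rw [slope_def_field, div_lt_iff₀ hzx']
    nlinarith

abbrev EE (n : ℕ) := EuclideanSpace ℝ (Fin n)

lemma piecewise_le {n : ℕ} {Ω : Set (EE n)}
    {F : EE n → EE n → ℝ} (hF : ContinuousOn (fun p : EE n × EE n => F p.1 p.2) (Ω ×ˢ univ))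
    {P : EE n → ℝ} (hP : ContinuousOn P Ω)
    (hPF : ∀ z ∈ Ω, ∀ v : EE n, ∀ ε > 0, ∀ᶠ p : ℝ × EE n in 𝓝[>] 0 ×ˢ 𝓝 v,
      P (z + p.1 • p.2) - P z ≤ p.1 * (F z v + ε))
    {γ : ℝ → EE n} (hγ : PiecewiseC1 n γ)
    (hγΩ : ∀ t ∈ Icc (0:ℝ) 1, γ t ∈ Ω) :
    P (γ 1) - P (γ 0) ≤ ∫ t in (0:ℝ)..1, F (γ t) (deriv γ t) := by
  obtain ⟨k, s, hs, h0, h1, hc⟩ := hγ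
  have hmem : ∀ i, s i ∈ Icc (0:ℝ) 1 := fun i =>
    ⟨h0 ▸ hs.monotone (Fin.zero_le i), h1 ▸ hs.monotone (Fin.le_last i)⟩
  have key : ∀ i : Fin (k+1), IntervalIntegrable (fun t => F (γ t) (deriv γ t)) volume 0 (s i) ∧
      P (γ (s i)) - P (γ 0) ≤ ∫ t in (0:ℝ)..(s i), F (γ t) (deriv γ t) := by
    intro i
    induction i using Fin.induction with
    | zero => rw [h0]; simp
    | succ i ih =>
      obtain ⟨a1, a2⟩ := piece_le hF hP hPF (hs (Fin.castSucc_lt_succ (i := i))) (hc i)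
        (fun t ht => hγΩ t ⟨(hmem _).1.trans ht.1, ht.2.trans (hmem _).2⟩)
      refine ⟨ih.1.trans a1, ?_⟩
      rw [← intervalIntegral.integral_add_adjacent_intervals ih.1 a1]
      linarith [ih.2]
  have := (key (Fin.last k)).2
  rwa [h1] at this

lemma segment_piecewise {n : ℕ} (x y : EE n) : PiecewiseC1 n (fun t : ℝ => x + t • y) := by
  refine ⟨1, fun i => (i : ℕ), ?_, by simp, by simp, ?_⟩
  · intro i j hij
    simpa using hij
  · intro i
    apply ContDiff.contDiffOn
    fun_prop

lemma segment_deriv {n : ℕ} (x y : EE n) (t : ℝ) : deriv (fun t : ℝ => x + t • y) t = y := by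
  have : HasDerivAt (fun t : ℝ => x + t • y) ((1:ℝ) • y) t :=
    ((hasDerivAt_id t).smul_const y).const_add x
  rw [this.deriv, one_smul]

lemma seg_mem {n : ℕ} {Ω : Set (EE n)} (hc : Convex ℝ Ω) {x y : EE n} (hx : x ∈ Ω) (hy : x + y ∈ Ω)
    {t : ℝ} (ht : t ∈ Icc (0:ℝ) 1) : x + t • y ∈ Ω :=
  hc.add_smul_mem hx hy ht

lemma seg_mem' {n : ℕ} {Ω : Set (EE n)} (hc : Convex ℝ Ω) {x y : EE n} (hx : x ∈ Ω) {T : ℝ} (hy : x + T • y ∈ Ω)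
    {t : ℝ} (ht : t ∈ Icc (0:ℝ) T) : x + t • y ∈ Ω := by
  rcases eq_or_lt_of_le (ht.1.trans ht.2) with h | h
  · have : t = 0 := le_antisymm (h ▸ ht.2) ht.1
    simpa [this] using hx
  · have := seg_mem hc hx hy (t := t / T) ⟨div_nonneg ht.1 h.le, (div_le_one h).2 ht.2⟩
    rwa [smul_smul, div_mul_cancel₀ _ h.ne'] at this

lemma additive {n : ℕ} {Ω : Set (EE n)} (hΩconv : Convex ℝ Ω)
    {d : EE n → EE n → ℝ}
    (hd : IsAsymmetricMetric n Ω d) (hpf : IsProjFlatMetric n Ω d)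
    {x y : EE n} (hx : x ∈ Ω) {s t : ℝ} (hs : 0 ≤ s) (hst : s ≤ t) (hy : x + t • y ∈ Ω) :
    d x (x + t • y) = d x (x + s • y) + d (x + s • y) (x + t • y) := by
  have hsΩ : x + s • y ∈ Ω := seg_mem' hΩconv hx hy ⟨hs, hst⟩
  apply le_antisymm (hd.2.2 _ hx _ hsΩ _ hy)
  rcases eq_or_lt_of_le hs with h0 | h0
  · subst h0
    simp [(hd.2.1 x hx x hx).2.2 rfl]
  rcases eq_or_lt_of_le hst with h1 | h1
  · subst h1
    simp [(hd.2.1 _ hsΩ _ hsΩ).2.2 rfl]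
  have ht : 0 < t := h0.trans h1
  have h := hpf x hx _ hy
  have hle : ENNReal.ofReal (d x (x + s • y)) + ENNReal.ofReal (d (x + s • y) (x + t • y)) ≤
      ENNReal.ofReal (d x (x + t • y)) := by
    rw [h]
    apply le_sSup
    refine ⟨2, ![0, s / t, 1], ?_, by simp, by simp [Fin.last], ?_⟩
    · rw [Fin.strictMono_iff_lt_succ]
      intro i
      fin_cases i
      · simpa using div_pos h0 ht
      · simpa using (div_lt_one ht).2 h1
    · rw [Fin.sum_univ_two]
      have e : (1 - s / t) • x + (s / t) • (x + t • y) = x + s • y := by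
        rw [smul_add, smul_smul, div_mul_cancel₀ _ ht.ne', sub_smul, one_smul]
        abel
      simp [e, -smul_add]
  rw [← ENNReal.ofReal_add (hd.2.1 _ hx _ hsΩ).1 (hd.2.1 _ hsΩ _ hy).1] at hle
  exact (ENNReal.ofReal_le_ofReal_iff (hd.2.1 _ hx _ hy).1).1 hle

/-- The infinitesimal metric. -/
def HasInf (n : ℕ) (Ω : Set (EE n)) (d F : EE n → EE n → ℝ) : Prop :=
  ∀ x ∈ Ω, ∀ y : EE n, Tendsto (fun t : ℝ => d x (x + t • y) / t) (𝓝[>] 0) (𝓝 (F x y))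

lemma shift_tendsto (x : ℝ) : Tendsto (fun z => z - x) (𝓝[>] x) (𝓝[>] 0) := by
  apply tendsto_nhdsWithin_of_tendsto_nhds_of_eventually_within
  · have : Tendsto (fun z => z - x) (𝓝 x) (𝓝 (x - x)) := by
      exact (continuous_id.sub continuous_const).tendsto x
    rw [sub_self] at this
    exact this.mono_left nhdsWithin_le_nhds
  · filter_upwards [self_mem_nhdsWithin] with z hz
    simpa using hz

/-- right derivative along a segment -/
lemma right_deriv {n : ℕ} {Ω : Set (EE n)} (hΩconv : Convex ℝ Ω)
    {d F : EE n → EE n → ℝ}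
    (hd : IsAsymmetricMetric n Ω d) (hpf : IsProjFlatMetric n Ω d) (hF : HasInf n Ω d F)
    {x y : EE n} (hx : x ∈ Ω) {s T : ℝ} (hs : 0 ≤ s) (hsT : s < T) (hy : x + T • y ∈ Ω) :
    HasDerivWithinAt (fun t : ℝ => d x (x + t • y)) (F (x + s • y) y) (Ioi s) s := by
  rw [hasDerivWithinAt_iff_tendsto_slope' (by simp)]
  have hsΩ : x + s • y ∈ Ω := seg_mem' hΩconv hx hy ⟨hs, hsT.le⟩
  have h := (hF (x + s • y) hsΩ y).comp (shift_tendsto s)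
  refine h.congr' ?_
  filter_upwards [Ioo_mem_nhdsGT hsT] with t ht
  have htΩ : x + t • y ∈ Ω := seg_mem' hΩconv hx hy ⟨hs.trans ht.1.le, ht.2.le⟩
  have e : x + s • y + (t - s) • y = x + t • y := by rw [sub_smul]; abel
  simp only [Function.comp, slope_def_field, e]
  rw [additive hΩconv hd hpf hx hs ht.1.le htΩ]
  congr 1
  ring

lemma ftc {n : ℕ} {Ω : Set (EE n)} (hΩconv : Convex ℝ Ω)
    {d F : EE n → EE n → ℝ}
    (hd : IsAsymmetricMetric n Ω d) (hpf : IsProjFlatMetric n Ω d)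
    (hFc : ContinuousOn (fun p : EE n × EE n => F p.1 p.2) (Ω ×ˢ univ)) (hF : HasInf n Ω d F)
    {x y : EE n} (hx : x ∈ Ω) (hy : x + y ∈ Ω) :
    IntervalIntegrable (fun t : ℝ => F (x + t • y) y) volume 0 1 ∧
    d x (x + y) = ∫ t in (0:ℝ)..1, F (x + t • y) y := by
  have hm : ∀ t ∈ Icc (0:ℝ) 1, x + t • y ∈ Ω := fun t ht => seg_mem hΩconv hx hy ht
  have hI : IntervalIntegrable (fun t : ℝ => F (x + t • y) y) volume 0 1 := by
    apply ContinuousOn.intervalIntegrable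
    rw [uIcc_of_le zero_le_one]
    exact hFc.comp (f := fun t : ℝ => (x + t • y, y)) (by fun_prop)
      (fun t ht => ⟨hm t ht, mem_univ _⟩)
  refine ⟨hI, ?_⟩
  have := intervalIntegral.integral_eq_sub_of_hasDeriv_right_of_le zero_le_one
    (f := fun t : ℝ => d x (x + t • y)) (f' := fun t : ℝ => F (x + t • y) y)
    (hd.1.comp (f := fun t : ℝ => (x, x + t • y)) (by fun_prop)
      (fun t ht => ⟨hx, hm t ht⟩)) ?_ hI
  · rw [this]
    simp [(hd.2.1 x hx x hx).2.2 rfl]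
  · intro s hs
    exact right_deriv hΩconv hd hpf hF hx hs.1.le hs.2 (by simpa using hy)

lemma hom_ext {n : ℕ} {A B : EE n → ℝ} (hA0 : A 0 = 0) (hB0 : B 0 = 0)
    (hA : ∀ α : ℝ, 0 < α → ∀ v, A (α • v) = α * A v) (hB : ∀ α : ℝ, 0 < α → ∀ v, B (α • v) = α * B v)
    (h : ∀ u ∈ Metric.sphere (0 : EE n) 1, A u ≤ B u) (v : EE n) : A v ≤ B v := by
  by_cases hv : v = 0
  · rw [hv, hA0, hB0]
  have hp : 0 < ‖v‖ := norm_pos_iff.2 hv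
  have e : v = ‖v‖ • (‖v‖⁻¹ • v) := by rw [smul_smul, mul_inv_cancel₀ hp.ne', one_smul]
  rw [e, hA _ hp, hB _ hp]
  apply mul_le_mul_of_nonneg_left _ hp.le
  apply h
  simp [norm_smul, inv_mul_cancel₀ hp.ne']

lemma norm_hom {n : ℕ} (c : ℝ) (α : ℝ) (hα : 0 < α) (v : EE n) : c * ‖α • v‖ = α * (c * ‖v‖) := by
  rw [norm_smul, Real.norm_of_nonneg hα.le]; ring

lemma loc_bounds {n : ℕ} {Ω : Set (EE n)} (hΩ : IsOpen Ω) {F : EE n → EE n → ℝ}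
    (hF : IsPseudoNormFunction n Ω F) {x : EE n} (hx : x ∈ Ω) :
    ∃ c > 0, ∃ C > 0, ∀ᶠ z in 𝓝 x, z ∈ Ω ∧ ∀ v, c * ‖v‖ ≤ F z v ∧ F z v ≤ C * ‖v‖ := by
  have hcx : ContinuousOn (F x) (Metric.sphere 0 1) :=
    (hF.1.comp (f := fun v => (x, v)) (by fun_prop) (fun v _ => ⟨hx, mem_univ _⟩))
  have hne : ∀ u ∈ Metric.sphere (0 : EE n) 1, 0 < F x u := by
    intro u hu
    refine lt_of_le_of_ne (((hF.2 x hx).1 u).1) fun h => ?_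
    have := ((hF.2 x hx).1 u).2.1 h.symm
    simp [this] at hu
  obtain ⟨c, hc, hc'⟩ := (isCompact_sphere (0 : EE n) 1).exists_forall_le' hcx hne
  obtain ⟨C, hC⟩ := (isCompact_sphere (0 : EE n) 1).exists_bound_of_continuousOn hcx
  have hnear : ∀ᶠ z in 𝓝 x, ∀ u ∈ Metric.sphere (0 : EE n) 1, c / 2 ≤ F z u ∧ F z u ≤ |C| + 1 := by
    apply (isCompact_sphere (0 : EE n) 1).eventually_forall_of_forall_eventually
    intro u hu
    have hcont : ContinuousAt (fun p : EE n × EE n => F p.1 p.2) (x, u) :=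
      hF.1.continuousAt ((hΩ.prod isOpen_univ).mem_nhds ⟨hx, mem_univ _⟩)
    have h1 := hcont.eventually_lt_const (u := |C| + 1) (by
      have := hC u hu
      have := le_abs_self (F x u)
      have := le_abs_self C
      simp only [Real.norm_eq_abs] at *
      linarith)
    have h2 := hcont.eventually_const_lt (u := c / 2) (by
      have := hc' u hu
      simp only
      linarith)
    filter_upwards [h1, h2] with z hz1 hz2 using ⟨hz2.le, hz1.le⟩
  refine ⟨c / 2, by linarith, |C| + 1, by positivity, ?_⟩
  filter_upwards [hnear, hΩ.mem_nhds hx] with z hz hzΩ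
  refine ⟨hzΩ, fun v => ⟨?_, ?_⟩⟩
  · refine hom_ext (A := fun v => c / 2 * ‖v‖) (by simp) (((hF.2 z hzΩ).1 0).2.2 rfl)
      (norm_hom _) (hF.2 z hzΩ).2.1 (fun u hu => ?_) v
    simp only [mem_sphere_zero_iff_norm.1 hu, mul_one]
    exact (hz u hu).1
  · refine hom_ext (B := fun v => (|C| + 1) * ‖v‖) (((hF.2 z hzΩ).1 0).2.2 rfl) (by simp)
      (hF.2 z hzΩ).2.1 (norm_hom _) (fun u hu => ?_) v
    simp only [mem_sphere_zero_iff_norm.1 hu, mul_one]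
    exact (hz u hu).2

lemma loc_compare {n : ℕ} {Ω : Set (EE n)} (hΩ : IsOpen Ω) {F : EE n → EE n → ℝ}
    (hF : IsPseudoNormFunction n Ω F) {x : EE n} (hx : x ∈ Ω) {ε : ℝ} (hε : 0 < ε) :
    ∀ᶠ z in 𝓝 x, ∀ v, (1 - ε) * F x v ≤ F z v := by
  have hnear : ∀ᶠ z in 𝓝 x, ∀ u ∈ Metric.sphere (0 : EE n) 1, (1 - ε) * F x u ≤ F z u := by
    apply (isCompact_sphere (0 : EE n) 1).eventually_forall_of_forall_eventually
    intro u hu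
    have hcont : ContinuousAt (fun p : EE n × EE n => F p.1 p.2) (x, u) :=
      hF.1.continuousAt ((hΩ.prod isOpen_univ).mem_nhds ⟨hx, mem_univ _⟩)
    have hcont2 : ContinuousAt (fun p : EE n × EE n => (1 - ε) * F x p.2) (x, u) := by
      have : ContinuousAt (fun p : EE n × EE n => F x p.2) (x, u) :=
        ContinuousAt.comp (f := fun p : EE n × EE n => (x, p.2)) (x := (x, u))
          (g := fun p : EE n × EE n => F p.1 p.2) hcont (by fun_prop)
      exact continuousAt_const.mul this
    have hpos : 0 < F x u := by
      refine lt_of_le_of_ne (((hF.2 x hx).1 u).1) fun h => ?_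
      have := ((hF.2 x hx).1 u).2.1 h.symm
      simp [this] at hu
    have := hcont2.eventually_lt hcont (by simp only; nlinarith)
    filter_upwards [this] with z hz using hz.le
  filter_upwards [hnear, hΩ.mem_nhds hx] with z hz hzΩ v
  refine hom_ext (A := fun v => (1 - ε) * F x v) (by simp [((hF.2 x hx).1 0).2.2 rfl])
    (((hF.2 z hzΩ).1 0).2.2 rfl) ?_ (hF.2 z hzΩ).2.1 hz v
  intro α hα v
  rw [(hF.2 x hx).2.1 α hα]; ring

/-- Lower bound for the induced distance. -/
lemma induced_lower {n : ℕ} {Ω : Set (EE n)} (hΩ : IsOpen Ω) (hΩconv : Convex ℝ Ω)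
    {d F : EE n → EE n → ℝ}
    (hF : IsPseudoNormFunction n Ω F) (hI : InducesDist n Ω F d)
    {x : EE n} (hx : x ∈ Ω) {ε : ℝ} (hε : 0 < ε) (hε1 : ε < 1) :
    ∃ m > 0, ∀ z ∈ Ω, (1 - ε) * min (F x (z - x)) m ≤ d x z := by
  obtain ⟨c, hc, C, hC, hb⟩ := loc_bounds hΩ hF hx
  have hbx := hb.self_of_nhds.2
  obtain ⟨δ, hδ, hball⟩ := Metric.eventually_nhds_iff.1 (loc_compare hΩ hF hx hε)
  have hFcx : Continuous (F x) := by
    rw [← continuousOn_univ]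
    exact (hF.1.comp (f := fun v => (x, v)) (by fun_prop) (fun v _ => ⟨hx, mem_univ _⟩))
  refine ⟨c * δ, by positivity, fun z hz => ?_⟩
  rw [hI x hx z hz]
  apply le_csInf
  · refine ⟨_, fun t : ℝ => x + t • (z - x), segment_piecewise x (z - x), ?_, by simp, by simp, rfl⟩
    intro t ht
    exact seg_mem hΩconv hx (by simpa using hz) ht
  rintro L ⟨γ, hγ, hγΩ, h0, h1, rfl⟩
  have := piecewise_le (P := fun z => (1 - ε) * min (F x (z - x)) (c * δ)) hF.1 ?_ ?_ hγ hγΩ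
  · rw [h0, h1] at this
    simp only [sub_self, ((hF.2 x hx).1 0).2.2 rfl] at this
    rw [min_eq_left (show (0:ℝ) ≤ c * δ by positivity)] at this
    linarith
  · apply Continuous.continuousOn
    fun_prop
  · intro w hw v η hη
    have h1ε : 0 < 1 - ε := by linarith
    by_cases hwd : dist w x < δ
    · have hcont : Tendsto (fun p : ℝ × EE n => F x p.2) (𝓝[>] 0 ×ˢ 𝓝 v) (𝓝 (F x v)) :=
        (hFcx.tendsto v).comp tendsto_snd
      have h2 := hcont.eventually_lt_const (u := F x v + η) (by linarith)
      have h3 : ∀ᶠ p : ℝ × EE n in 𝓝[>] 0 ×ˢ 𝓝 v, 0 < p.1 :=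
        tendsto_fst.eventually (self_mem_nhdsWithin)
      filter_upwards [h2, h3] with p hp hp0
      have k1 : F x (w + p.1 • p.2 - x) ≤ F x (w - x) + p.1 * F x p.2 := by
        rw [← (hF.2 x hx).2.1 _ hp0]
        have := (hF.2 x hx).2.2 (w - x) (p.1 • p.2)
        rwa [show w - x + p.1 • p.2 = w + p.1 • p.2 - x by abel] at this
      have k2 : min (F x (w + p.1 • p.2 - x)) (c * δ) ≤ min (F x (w - x)) (c * δ) + p.1 * F x p.2 := by
        have k3 : 0 ≤ p.1 * F x p.2 := mul_nonneg hp0.le ((hF.2 x hx).1 _).1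
        rcases min_cases (F x (w - x)) (c * δ) with ⟨e, _⟩ | ⟨e, _⟩ <;> rw [e]
        · exact (min_le_left _ _).trans k1
        · exact (min_le_right _ _).trans (by linarith)
      have k4 := hball hwd v
      have k5 : (1 - ε) * (p.1 * F x p.2) ≤ p.1 * (F w v + η) := by
        have : (1 - ε) * F x p.2 ≤ F w v + η := by nlinarith
        nlinarith
      nlinarith
    · have h3 : ∀ᶠ p : ℝ × EE n in 𝓝[>] 0 ×ˢ 𝓝 v, 0 < p.1 :=
        tendsto_fst.eventually (self_mem_nhdsWithin)
      filter_upwards [h3] with p hp0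
      have k1 : c * δ ≤ F x (w - x) := by
        refine le_trans ?_ (hbx (w - x)).1
        rw [← dist_eq_norm]
        have := not_lt.1 hwd
        gcongr
      rw [min_eq_right k1]
      have k2 := min_le_right (F x (w + p.1 • p.2 - x)) (c * δ)
      have k3 : 0 ≤ p.1 * (F w v + η) := mul_nonneg hp0.le (by linarith [((hF.2 w hw).1 v).1])
      nlinarith

lemma int_nonneg {n : ℕ} {Ω : Set (EE n)} {F : EE n → EE n → ℝ}
    (hF : IsPseudoNormFunction n Ω F) {γ : ℝ → EE n} (hγ : ∀ t ∈ Icc (0:ℝ) 1, γ t ∈ Ω) :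
    0 ≤ ∫ t in (0:ℝ)..1, F (γ t) (deriv γ t) :=
  intervalIntegral.integral_nonneg zero_le_one fun t ht => ((hF.2 _ (hγ t ht)).1 _).1

lemma induced_upper {n : ℕ} {Ω : Set (EE n)} (hΩconv : Convex ℝ Ω)
    {d F : EE n → EE n → ℝ}
    (hF : IsPseudoNormFunction n Ω F) (hI : InducesDist n Ω F d)
    {x y : EE n} (hx : x ∈ Ω) (hy : x + y ∈ Ω) :
    d x (x + y) ≤ ∫ t in (0:ℝ)..1, F (x + t • y) y := by
  rw [hI x hx _ hy]
  apply csInf_le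
  · refine ⟨0, ?_⟩
    rintro L ⟨γ, hγ, hγΩ, h0, h1, rfl⟩
    exact int_nonneg hF hγΩ
  · refine ⟨fun t : ℝ => x + t • y, segment_piecewise x y,
      fun t ht => seg_mem hΩconv hx hy ht, by simp, by simp, ?_⟩
    simp only [segment_deriv]

lemma ev_mem {n : ℕ} {Ω : Set (EE n)} (hΩ : IsOpen Ω) {x : EE n} (hx : x ∈ Ω) (y : EE n) :
    ∀ᶠ t : ℝ in 𝓝 0, x + t • y ∈ Ω := by
  have : ContinuousAt (fun t : ℝ => x + t • y) 0 := by fun_prop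
  exact this.eventually (by simpa using hΩ.mem_nhds hx)

lemma hasInf_of_induces {n : ℕ} {Ω : Set (EE n)} (hΩ : IsOpen Ω) (hΩconv : Convex ℝ Ω)
    {d F : EE n → EE n → ℝ}
    (hF : IsPseudoNormFunction n Ω F) (hI : InducesDist n Ω F d) : HasInf n Ω d F := by
  intro x hx y
  have hF0 : 0 ≤ F x y := ((hF.2 x hx).1 y).1
  rw [tendsto_order]
  constructor
  · intro a ha
    obtain ⟨ε, hε, hε1, hεa⟩ : ∃ ε : ℝ, 0 < ε ∧ ε < 1 ∧ a < (1 - ε) * F x y := by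
      have : Tendsto (fun ε : ℝ => (1 - ε) * F x y) (𝓝[>] 0) (𝓝 ((1 - 0) * F x y)) := by
        apply Tendsto.mono_left _ nhdsWithin_le_nhds
        exact Continuous.tendsto (by fun_prop) 0
      rw [sub_zero, one_mul] at this
      obtain ⟨ε, h1, h2⟩ := ((this.eventually_const_lt ha).and
        (Ioo_mem_nhdsGT (zero_lt_one))).exists
      exact ⟨ε, h2.1, h2.2, h1⟩
    obtain ⟨m, hm, hlow⟩ := induced_lower hΩ hΩconv hF hI hx hε hε1
    have hmem := (ev_mem hΩ hx y).filter_mono (nhdsWithin_le_nhds (s := Ioi (0:ℝ)))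
    have hsm : ∀ᶠ t : ℝ in 𝓝[>] 0, t * F x y < m := by
      have : Tendsto (fun t : ℝ => t * F x y) (𝓝[>] 0) (𝓝 (0 * F x y)) := by
        apply Tendsto.mono_left _ nhdsWithin_le_nhds
        exact Continuous.tendsto (by fun_prop) 0
      rw [zero_mul] at this
      exact this.eventually_lt_const hm
    filter_upwards [hmem, hsm, self_mem_nhdsWithin] with t h1 h2 (h3 : 0 < t)
    have := hlow _ h1
    rw [add_sub_cancel_left, (hF.2 x hx).2.1 t h3, min_eq_left h2.le] at this
    rw [lt_div_iff₀ h3]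
    nlinarith
  · intro a ha
    have hcont : ContinuousAt (fun t : ℝ => F (x + t • y) y) 0 := by
      have h1 : ContinuousAt (fun p : EE n × EE n => F p.1 p.2) (x + (0:ℝ) • y, y) :=
        hF.1.continuousAt ((hΩ.prod isOpen_univ).mem_nhds ⟨by simpa using hx, mem_univ _⟩)
      exact ContinuousAt.comp (f := fun t : ℝ => (x + t • y, y))
        (g := fun p : EE n × EE n => F p.1 p.2) h1 (by fun_prop)
    obtain ⟨b, hb1, hb2⟩ := exists_between ha
    have h2 := (hcont.eventually_lt_const (u := b) (by simpa using hb1)).and (ev_mem hΩ hx y)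
    obtain ⟨δ, hδ, hball⟩ := Metric.eventually_nhds_iff.1 h2
    filter_upwards [Ioo_mem_nhdsGT hδ] with t ht
    have hs : ∀ s ∈ Icc (0:ℝ) 1, F (x + (s * t) • y) y ≤ b := by
      intro s hs
      refine (hball ?_).1.le
      rw [Real.dist_0_eq_abs, abs_of_nonneg (mul_nonneg hs.1 ht.1.le)]
      nlinarith [hs.2, ht.1, ht.2]
    have htΩ : x + t • y ∈ Ω := (hball (by
      rw [Real.dist_0_eq_abs, abs_of_nonneg ht.1.le]; exact ht.2)).2
    have h3 := induced_upper hΩconv hF hI hx htΩ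
    have h4 : ∫ s in (0:ℝ)..1, F (x + s • t • y) (t • y) ≤ ∫ s in (0:ℝ)..1, t * b := by
      apply intervalIntegral.integral_mono_on zero_le_one
      · apply ContinuousOn.intervalIntegrable
        rw [uIcc_of_le zero_le_one]
        exact hF.1.comp (f := fun s : ℝ => (x + s • t • y, t • y)) (by fun_prop)
          (fun s hs => ⟨seg_mem hΩconv hx htΩ hs, mem_univ _⟩)
      · exact intervalIntegrable_const
      · intro s hs'
        rw [(hF.2 _ (seg_mem hΩconv hx htΩ hs')).2.1 t ht.1, smul_smul]
        exact mul_le_mul_of_nonneg_left (hs s hs') ht.1.le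
    simp only [intervalIntegral.integral_const, sub_zero, one_smul] at h4
    rw [div_lt_iff₀ ht.1]
    nlinarith [ht.1]

def CondB (n : ℕ) (Ω : Set (EE n)) (d : EE n → EE n → ℝ) : Prop :=
  ∀ x ∈ Ω, ∃ r : ℝ, 0 < r ∧ ∃ c : ℝ, 0 < c ∧ ∃ C : ℝ, 0 < C ∧
        Metric.ball x r ⊆ Ω ∧
        ∀ x₁ ∈ Metric.ball x r, ∀ x₂ ∈ Metric.ball x r,
          (c * ‖x₂ - x₁‖ ≤ d x₁ x₂ ∧ d x₁ x₂ ≤ C * ‖x₂ - x₁‖) ∧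
          ∀ y : EE n, x₁ + y ∈ Metric.ball x r →
            x₂ + y ∈ Metric.ball x r →
            |d x₁ (x₁ + y) - d x₂ (x₂ + y)| ≤ C * ‖y‖ * ‖x₂ - x₁‖

lemma condB_of_A {n : ℕ} {Ω : Set (EE n)} (hΩ : IsOpen Ω) (hΩconv : Convex ℝ Ω)
    {d F : EE n → EE n → ℝ}
    (hd : IsAsymmetricMetric n Ω d) (hpf : IsProjFlatMetric n Ω d)
    (hF : IsPseudoNormFunction n Ω F) (hW : WeakLipschitz n Ω F) (hI : InducesDist n Ω F d) :
    CondB n Ω d := by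
  intro x hx
  have hinf := hasInf_of_induces hΩ hΩconv hF hI
  obtain ⟨c, hc, C, hC, hb⟩ := loc_bounds hΩ hF hx
  obtain ⟨U, hU, hUΩ, C', hC', hL⟩ := hW x hx
  obtain ⟨r, hr, hball⟩ := Metric.eventually_nhds_iff_ball.1 (hb.and hU)
  have hBΩ : Metric.ball x r ⊆ Ω := fun z hz => (hball z hz).1.1
  have hconvB : Convex ℝ (Metric.ball x r) := convex_ball x r
  refine ⟨r, hr, c, hc, C + C', by positivity, hBΩ, fun x₁ h₁ x₂ h₂ => ⟨?_, ?_⟩⟩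
  · obtain ⟨i1, i2⟩ := ftc hΩconv hd hpf hF.1 hinf (x := x₁) (y := x₂ - x₁) (hBΩ h₁)
      (by simpa using hBΩ h₂)
    rw [add_sub_cancel] at i2
    have hm : ∀ t ∈ Icc (0:ℝ) 1, x₁ + t • (x₂ - x₁) ∈ Metric.ball x r := fun t ht =>
      seg_mem hconvB h₁ (by simpa using h₂) ht
    rw [i2]
    constructor
    · have := intervalIntegral.integral_mono_on zero_le_one (intervalIntegrable_const
        (c := c * ‖x₂ - x₁‖)) i1 (fun t ht => ((hball _ (hm t ht)).1.2 _).1)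
      simpa using this
    · have := intervalIntegral.integral_mono_on zero_le_one i1 (intervalIntegrable_const
        (c := C * ‖x₂ - x₁‖)) (fun t ht => ((hball _ (hm t ht)).1.2 _).2)
      simp only [intervalIntegral.integral_const, sub_zero, one_smul] at this
      nlinarith [norm_nonneg (x₂ - x₁)]
  · intro y hy1 hy2
    obtain ⟨i1, i2⟩ := ftc hΩconv hd hpf hF.1 hinf (hBΩ h₁) (hBΩ hy1)
    obtain ⟨j1, j2⟩ := ftc hΩconv hd hpf hF.1 hinf (hBΩ h₂) (hBΩ hy2)
    rw [i2, j2, ← intervalIntegral.integral_sub i1 j1]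
    have := intervalIntegral.norm_integral_le_of_norm_le_const (a := 0) (b := 1)
      (f := fun t : ℝ => F (x₁ + t • y) y - F (x₂ + t • y) y) (C := C' * ‖y‖ * ‖x₂ - x₁‖) ?_
    · rw [Real.norm_eq_abs] at this
      refine this.trans ?_
      simp only [sub_zero, abs_one, mul_one]
      gcongr
      linarith
    · intro t ht
      rw [uIoc_of_le zero_le_one] at ht
      have ht' := Ioc_subset_Icc_self ht
      have := hL _ (hball _ (seg_mem hconvB h₁ hy1 ht')).2 _ (hball _ (seg_mem hconvB h₂ hy2 ht')).2 y
      rw [add_sub_add_right_eq_sub, norm_sub_rev] at this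
      exact this

lemma lim_exists {n : ℕ} {Ω : Set (EE n)} (hΩconv : Convex ℝ Ω)
    {d : EE n → EE n → ℝ}
    (hd : IsAsymmetricMetric n Ω d) (hpf : IsProjFlatMetric n Ω d)
    (hB : CondB n Ω d) {x : EE n} (hx : x ∈ Ω) (y : EE n) :
    ∃ l, Tendsto (fun t : ℝ => d x (x + t • y) / t) (𝓝[>] 0) (𝓝 l) := by
  obtain ⟨r, hr, c, hc, C, hC, hBΩ, hb⟩ := hB x hx
  set φ : ℝ → ℝ := fun t => d x (x + t • y) with hφ
  obtain ⟨T, hT, hTm⟩ : ∃ T > 0, ∀ t : ℝ, 0 ≤ t → t < T → x + t • y ∈ Metric.ball x r := by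
    obtain ⟨T, hT, h⟩ := Metric.eventually_nhds_iff.1
      (ev_mem Metric.isOpen_ball (Metric.mem_ball_self hr (x := x)) y)
    refine ⟨T, hT, fun t ht htT => h ?_⟩
    rwa [Real.dist_0_eq_abs, abs_of_nonneg ht]
  have hxB : x ∈ Metric.ball x r := Metric.mem_ball_self hr
  set K := C * ‖y‖ * ‖y‖ with hK
  have hK0 : 0 ≤ K := by positivity
  have hkey : ∀ s u : ℝ, 0 ≤ s → 0 ≤ u → s + u < T → |φ (s + u) - φ s - φ u| ≤ K * s * u := by
    intro s u hs hu hsu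
    have e : x + s • y + u • y = x + (s + u) • y := by rw [add_smul]; abel
    have h1 := additive hΩconv hd hpf hx hs (by linarith : s ≤ s + u)
      (hBΩ (hTm (s + u) (by linarith) hsu))
    have h2 := (hb (x + s • y) (hTm s hs (by linarith)) x hxB).2 (u • y)
      (by rw [e]; exact hTm _ (by linarith) hsu) (hTm u hu (by linarith))
    rw [e] at h2
    simp only [hφ]
    rw [h1, add_sub_cancel_left]
    refine h2.trans (le_of_eq ?_)
    rw [norm_smul, norm_sub_rev, add_sub_cancel_left, norm_smul, Real.norm_of_nonneg hs,
      Real.norm_of_nonneg hu, hK]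
    ring
  rw [← cauchy_map_iff_exists_tendsto, Metric.cauchy_iff]
  refine ⟨inferInstance, fun ε hε => ?_⟩
  set S := min T (ε / (4 * (K + 1))) with hS
  have hS0 : 0 < S := lt_min hT (by positivity)
  have hmono : MonotoneOn φ (Ioo 0 S) := by
    intro s hs t ht hst
    have htΩ := hBΩ (hTm t ht.1.le (ht.2.trans_le (min_le_left _ _)))
    have hsΩ := hBΩ (hTm s hs.1.le (hs.2.trans_le (min_le_left _ _)))
    have h1 := additive hΩconv hd hpf hx hs.1.le hst htΩ
    have := (hd.2.1 _ hsΩ _ htΩ).1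
    simp only [hφ]
    linarith
  obtain ⟨s, hsd, hs⟩ : ∃ s, DifferentiableWithinAt ℝ φ (Ioo 0 S) s ∧ s ∈ Ioo 0 S := by
    have : (ae (volume.restrict (Ioo 0 S))).NeBot := by
      rw [ae_neBot, Ne, Measure.restrict_eq_zero, Real.volume_Ioo]
      simpa using hS0
    exact ((hmono.ae_differentiableWithinAt measurableSet_Ioo).and
      (ae_restrict_mem measurableSet_Ioo)).exists
  have hsd' : HasDerivAt φ (deriv φ s) s :=
    (hsd.differentiableAt (Ioo_mem_nhds hs.1 hs.2)).hasDerivAt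
  set D := deriv φ s
  have hsl : Tendsto (slope φ s) (𝓝[>] s) (𝓝 D) :=
    (hasDerivWithinAt_iff_tendsto_slope' (by simp)).1 hsd'.hasDerivWithinAt
  have hadd : Tendsto (fun u : ℝ => s + u) (𝓝[>] 0) (𝓝[>] s) := by
    apply tendsto_nhdsWithin_of_tendsto_nhds_of_eventually_within
    · have : Tendsto (fun u => s + u) (𝓝 0) (𝓝 (s + 0)) :=
        Continuous.tendsto (by fun_prop) 0
      rw [add_zero] at this
      exact this.mono_left nhdsWithin_le_nhds
    · filter_upwards [self_mem_nhdsWithin] with z hz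
      simpa using hz
  have h4 := (Metric.tendsto_nhds.1 (hsl.comp hadd)) (ε / 4) (by positivity)
  have hsT : 0 < T - s := by
    have := hs.2.trans_le (min_le_left _ _)
    linarith
  have h5 : ∀ᶠ u in 𝓝[>] (0:ℝ), dist (φ u / u) D < ε / 2 := by
    filter_upwards [h4, Ioo_mem_nhdsGT hsT] with u hu hu0
    have h6 := hkey s u hs.1.le hu0.1.le (by linarith [hu0.2])
    have h7 : K * s ≤ ε / 4 := by
      have : s ≤ ε / (4 * (K + 1)) := hs.2.le.trans (min_le_right _ _)
      rw [le_div_iff₀ (by positivity)] at this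
      nlinarith [hs.1]
    simp only [Function.comp, slope_def_field, add_sub_cancel_left, Real.dist_eq] at hu
    have h8 : |φ u / u - (φ (s + u) - φ s) / u| ≤ ε / 4 := by
      rw [← sub_div, abs_div, abs_of_pos hu0.1, div_le_iff₀ hu0.1, abs_sub_comm]
      exact h6.trans (mul_le_mul_of_nonneg_right h7 hu0.1.le)
    rw [Real.dist_eq]
    have := abs_sub_le (φ u / u) ((φ (s + u) - φ s) / u) D
    linarith
  refine ⟨{z | dist z D < ε / 2}, h5, fun a ha b hb => ?_⟩
  have := dist_triangle_right a b D
  simp only [mem_ofPred_eq] at ha hb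
  linarith

lemma induces_of_hasInf {n : ℕ} {Ω : Set (EE n)} (hΩconv : Convex ℝ Ω)
    {d F : EE n → EE n → ℝ}
    (hd : IsAsymmetricMetric n Ω d) (hpf : IsProjFlatMetric n Ω d)
    (hB : CondB n Ω d) (hF : IsPseudoNormFunction n Ω F) (hinf : HasInf n Ω d F) :
    InducesDist n Ω F d := by
  intro x₁ h₁ x₂ h₂
  have hseg : PiecewiseC1 n (fun t : ℝ => x₁ + t • (x₂ - x₁)) ∧
      (∀ t ∈ Set.Icc (0 : ℝ) 1, x₁ + t • (x₂ - x₁) ∈ Ω) ∧ x₁ + (0:ℝ) • (x₂ - x₁) = x₁ ∧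
      x₁ + (1:ℝ) • (x₂ - x₁) = x₂ :=
    ⟨segment_piecewise _ _, fun t ht => seg_mem hΩconv h₁ (by simpa using h₂) ht, by simp, by simp⟩
  apply le_antisymm
  · refine le_csInf ⟨_, fun t : ℝ => x₁ + t • (x₂ - x₁), hseg.1, hseg.2.1, hseg.2.2.1, hseg.2.2.2, rfl⟩ ?_
    rintro L ⟨γ, hγ, hγΩ, h0, h1, rfl⟩
    have := piecewise_le (P := fun z => d x₁ z) hF.1 ?_ ?_ hγ hγΩ
    · rw [h0, h1, (hd.2.1 x₁ h₁ x₁ h₁).2.2 rfl] at this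
      linarith
    · exact hd.1.comp (f := fun z => (x₁, z)) (by fun_prop) (fun z hz => ⟨h₁, hz⟩)
    · intro z hz v ε hε
      obtain ⟨r, hr, c, hc, C, hC, hBΩ, hb⟩ := hB z hz
      have hle : 𝓝[>] (0:ℝ) ×ˢ 𝓝 v ≤ 𝓝 ((0:ℝ), v) := by
        rw [nhds_prod_eq]
        exact Filter.prod_mono nhdsWithin_le_nhds le_rfl
      have hc1 : ContinuousAt (fun p : ℝ × EE n => z + p.1 • p.2) (0, v) := by fun_prop
      have hc2 : ContinuousAt (fun p : ℝ × EE n => z + p.1 • v) (0, v) := by fun_prop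
      have hzB : Metric.ball z r ∈ 𝓝 z := Metric.ball_mem_nhds z hr
      have e1 := (hc1.eventually (p := fun w => w ∈ Metric.ball z r) (by simp only [zero_smul, add_zero]; exact hzB)).filter_mono hle
      have e2 := (hc2.eventually (p := fun w => w ∈ Metric.ball z r) (by simp only [zero_smul, add_zero]; exact hzB)).filter_mono hle
      have hc3 : ContinuousAt (fun p : ℝ × EE n => C * ‖p.2 - v‖) (0, v) := by fun_prop
      have e3 := (hc3.eventually_lt_const (u := ε / 2) (by simpa using hε)).filter_mono hle
      have e4 : ∀ᶠ p : ℝ × EE n in 𝓝[>] 0 ×ˢ 𝓝 v, d z (z + p.1 • v) / p.1 < F z v + ε / 2 :=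
        tendsto_fst.eventually ((hinf z hz v).eventually_lt_const (by linarith))
      have e5 : ∀ᶠ p : ℝ × EE n in 𝓝[>] 0 ×ˢ 𝓝 v, 0 < p.1 :=
        tendsto_fst.eventually (self_mem_nhdsWithin)
      filter_upwards [e1, e2, e3, e4, e5] with p p1 p2 p3 p4 p5
      have t1 := hd.2.2 x₁ h₁ z hz _ (hBΩ p1)
      have t2 := hd.2.2 z hz _ (hBΩ p2) _ (hBΩ p1)
      have t3 := (hb _ p2 _ p1).1.2
      rw [add_sub_add_left_eq_sub, ← smul_sub, norm_smul, Real.norm_of_nonneg p5.le] at t3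
      rw [div_lt_iff₀ p5] at p4
      nlinarith
  · apply csInf_le
    · refine ⟨0, ?_⟩
      rintro L ⟨γ, hγ, hγΩ, h0, h1, rfl⟩
      exact int_nonneg hF hγΩ
    · refine ⟨fun t : ℝ => x₁ + t • (x₂ - x₁), hseg.1, hseg.2.1, hseg.2.2.1, hseg.2.2.2, ?_⟩
      simp only [segment_deriv]
      have := (ftc hΩconv hd hpf hF.1 hinf h₁ (y := x₂ - x₁) (by simpa using h₂)).2
      rwa [add_sub_cancel] at this

lemma A_of_condB {n : ℕ} {Ω : Set (EE n)} (hΩ : IsOpen Ω) (hΩconv : Convex ℝ Ω)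
    {d : EE n → EE n → ℝ}
    (hd : IsAsymmetricMetric n Ω d) (hpf : IsProjFlatMetric n Ω d) (hB : CondB n Ω d) :
    ∃ F, IsPseudoNormFunction n Ω F ∧ WeakLipschitz n Ω F ∧ InducesDist n Ω F d := by
  set F : EE n → EE n → ℝ := fun x y => limUnder (𝓝[>] 0) (fun t : ℝ => d x (x + t • y) / t) with hFdef
  have hinf : HasInf n Ω d F := fun x hx y =>
    tendsto_nhds_limUnder (lim_exists hΩconv hd hpf hB hx y)
  have hev : ∀ {x z : EE n} {r : ℝ} (y : EE n), z ∈ Metric.ball x r →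
      ∀ᶠ t : ℝ in 𝓝[>] 0, z + t • y ∈ Metric.ball x r := fun y hz =>
    (ev_mem Metric.isOpen_ball hz y).filter_mono nhdsWithin_le_nhds
  have hpos : ∀ᶠ t : ℝ in 𝓝[>] 0, 0 < t := self_mem_nhdsWithin
  have hloc : ∀ x ∈ Ω, ∃ r > 0, ∃ c > 0, ∃ C > 0, Metric.ball x r ⊆ Ω ∧
      (∀ z ∈ Metric.ball x r, ∀ y, c * ‖y‖ ≤ F z y ∧ F z y ≤ C * ‖y‖) ∧
      (∀ z₁ ∈ Metric.ball x r, ∀ z₂ ∈ Metric.ball x r, ∀ y,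
        |F z₁ y - F z₂ y| ≤ C * ‖y‖ * ‖z₁ - z₂‖) := by
    intro x hx
    obtain ⟨r, hr, c, hc, C, hC, hBΩ, hb⟩ := hB x hx
    refine ⟨r, hr, c, hc, C, hC, hBΩ, fun z hz y => ⟨?_, ?_⟩, fun z₁ h₁ z₂ h₂ y => ?_⟩
    · apply ge_of_tendsto (hinf z (hBΩ hz) y)
      filter_upwards [hev y hz, hpos] with t ht ht0
      have := (hb z hz _ ht).1.1
      rw [add_sub_cancel_left, norm_smul, Real.norm_of_nonneg ht0.le] at this
      rw [le_div_iff₀ ht0]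
      linarith
    · apply le_of_tendsto (hinf z (hBΩ hz) y)
      filter_upwards [hev y hz, hpos] with t ht ht0
      have := (hb z hz _ ht).1.2
      rw [add_sub_cancel_left, norm_smul, Real.norm_of_nonneg ht0.le] at this
      rw [div_le_iff₀ ht0]
      linarith
    · apply le_of_tendsto (((hinf z₁ (hBΩ h₁) y).sub (hinf z₂ (hBΩ h₂) y)).abs)
      filter_upwards [hev y h₁, hev y h₂, hpos] with t t1 t2 ht0
      have := (hb z₁ h₁ z₂ h₂).2 (t • y) t1 t2
      rw [norm_smul, Real.norm_of_nonneg ht0.le, norm_sub_rev] at this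
      rw [← sub_div, abs_div, abs_of_pos ht0, div_le_iff₀ ht0]
      linarith
  have hsub : ∀ x ∈ Ω, ∀ y₁ y₂, F x (y₁ + y₂) ≤ F x y₁ + F x y₂ := by
    intro x hx y₁ y₂
    obtain ⟨r, hr, c, hc, C, hC, hBΩ, hb⟩ := hB x hx
    have hxB : x ∈ Metric.ball x r := Metric.mem_ball_self hr
    have hz : Tendsto (fun t : ℝ => C * ‖y₂‖ * (t * ‖y₁‖)) (𝓝[>] 0) (𝓝 (C * ‖y₂‖ * (0 * ‖y₁‖))) := by
      apply Tendsto.mono_left _ nhdsWithin_le_nhds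
      exact Continuous.tendsto (by fun_prop) 0
    rw [zero_mul, mul_zero] at hz
    have h3 := ((hinf x hx y₁).add (hinf x hx y₂)).add hz
    rw [add_zero] at h3
    apply le_of_tendsto_of_tendsto (hinf x hx (y₁ + y₂)) h3
    filter_upwards [hev y₁ hxB, hev y₂ hxB, hev (y₁ + y₂) hxB, hpos] with t t1 t2 t3 ht0
    have e : x + t • y₁ + t • y₂ = x + t • (y₁ + y₂) := by rw [smul_add]; abel
    have k1 := hd.2.2 x hx _ (hBΩ t1) _ (hBΩ t3)
    have k2 := (hb _ t1 x hxB).2 (t • y₂) (by rwa [e]) t2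
    rw [e, norm_sub_rev, add_sub_cancel_left, norm_smul, norm_smul, Real.norm_of_nonneg ht0.le] at k2
    have k3 := (abs_le.1 k2).2
    rw [← add_div, div_add' _ _ _ ht0.ne']
    gcongr
    linarith
  have hP : IsPseudoNormFunction n Ω F := by
    refine ⟨?_, fun x hx => ⟨?_, ?_, hsub x hx⟩⟩
    · rintro ⟨x, y⟩ ⟨hx, -⟩
      apply ContinuousAt.continuousWithinAt
      obtain ⟨r, hr, c, hc, C, hC, hBΩ, hb, hL⟩ := hloc x hx
      have hxB : x ∈ Metric.ball x r := Metric.mem_ball_self hr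
      rw [ContinuousAt, tendsto_iff_dist_tendsto_zero]
      have hz : Tendsto (fun p : EE n × EE n => C * ‖p.2‖ * ‖p.1 - x‖ + C * ‖p.2 - y‖ + C * ‖y - p.2‖)
          (𝓝 (x, y)) (𝓝 (C * ‖y‖ * ‖x - x‖ + C * ‖y - y‖ + C * ‖y - y‖)) :=
        Continuous.tendsto (by fun_prop) (x, y)
      simp only [sub_self, norm_zero, mul_zero, add_zero] at hz
      apply squeeze_zero' (Eventually.of_forall fun _ => dist_nonneg) _ hz
      have hmem : ∀ᶠ p : EE n × EE n in 𝓝 (x, y), p.1 ∈ Metric.ball x r :=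
        continuousAt_fst.eventually (Metric.ball_mem_nhds x hr)
      filter_upwards [hmem] with p hp
      rw [Real.dist_eq]
      have k1 := abs_le.1 (hL _ hp _ hxB p.2)
      have k2 := hsub x hx y (p.2 - y)
      have k3 := hsub x hx p.2 (y - p.2)
      rw [add_sub_cancel] at k2 k3
      have k4 := (hb x hxB (p.2 - y)).2
      have k5 := (hb x hxB (y - p.2)).2
      have := norm_nonneg (p.2 - y)
      have := norm_nonneg (y - p.2)
      have : 0 ≤ C * ‖p.2 - y‖ := by positivity
      have : 0 ≤ C * ‖y - p.2‖ := by positivity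
      rw [abs_le]
      constructor <;> linarith [k1.1, k1.2]
    · intro y
      obtain ⟨r, hr, c, hc, C, hC, hBΩ, hb, hL⟩ := hloc x hx
      have hxB : x ∈ Metric.ball x r := Metric.mem_ball_self hr
      have k := hb x hxB y
      have hn := norm_nonneg y
      refine ⟨le_trans (by positivity) k.1, fun h => ?_, fun h => ?_⟩
      · rw [h] at k
        have : ‖y‖ ≤ 0 := by nlinarith
        exact norm_le_zero_iff.1 this
      · subst h
        simp at k
        linarith
    · intro α hα y
      have h1 := hinf x hx (α • y)
      have hs : Tendsto (fun t : ℝ => t * α) (𝓝[>] 0) (𝓝[>] 0) := by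
        apply tendsto_nhdsWithin_of_tendsto_nhds_of_eventually_within
        · have : Tendsto (fun t : ℝ => t * α) (𝓝 0) (𝓝 (0 * α)) :=
            Continuous.tendsto (by fun_prop) 0
          rw [zero_mul] at this
          exact this.mono_left nhdsWithin_le_nhds
        · filter_upwards [hpos] with t ht
          exact mul_pos ht hα
      have h2 := ((hinf x hx y).comp hs).const_mul α
      refine tendsto_nhds_unique h1 (h2.congr' ?_)
      filter_upwards [hpos] with t ht
      simp only [Function.comp, smul_smul]
      field_simp
  refine ⟨F, hP, ?_, induces_of_hasInf hΩconv hd hpf hB hP hinf⟩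
  intro x hx
  obtain ⟨r, hr, c, hc, C, hC, hBΩ, hb, hL⟩ := hloc x hx
  exact ⟨_, Metric.ball_mem_nhds x hr, hBΩ, C, hC, hL⟩

lemma smooth_d {n : ℕ} {Ω : Set (EE n)} (hΩ : IsOpen Ω) (hΩconv : Convex ℝ Ω)
    {d F : EE n → EE n → ℝ}
    (hd : IsAsymmetricMetric n Ω d) (hpf : IsProjFlatMetric n Ω d)
    (hFc : ContinuousOn (fun p : EE n × EE n => F p.1 p.2) (Ω ×ˢ univ)) (hF : HasInf n Ω d F)
    (hs : ContDiffOn ℝ (⊤ : ℕ∞) (fun p : EE n × EE n => F p.1 p.2) (Ω ×ˢ {y | y ≠ 0})) :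
    ContDiffOn ℝ (⊤ : ℕ∞) (fun p : EE n × EE n => d p.1 p.2)
      {p : EE n × EE n | p.1 ∈ Ω ∧ p.2 ∈ Ω ∧ p.1 ≠ p.2} := by
  rw [contDiffOn_infty]
  intro k
  set Φ : (EE n × EE n) × ℝ → EE n × EE n := fun q => (q.1.1 + q.2 • (q.1.2 - q.1.1), q.1.2 - q.1.1) with hΦ
  have hΦs : ContDiff ℝ (⊤ : ℕ∞) Φ := by fun_prop
  have hopen : IsOpen (Ω ×ˢ {y : EE n | y ≠ 0}) := hΩ.prod isOpen_ne
  have hW : IsOpen (Φ ⁻¹' (Ω ×ˢ {y | y ≠ 0})) := hopen.preimage hΦs.continuous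
  have hU : IsOpen {p : EE n × EE n | p.1 ∈ Ω ∧ p.2 ∈ Ω ∧ p.1 ≠ p.2} :=
    (hΩ.preimage continuous_fst).inter ((hΩ.preimage continuous_snd).inter
      (isOpen_ne_fun continuous_fst continuous_snd))
  have := param_contDiffOn _ hW _ hU (fun p hp t ht => ?_) k (fun q => F (Φ q).1 (Φ q).2)
    (hs.comp (f := Φ) hΦs.contDiffOn (fun q hq => hq))
  · refine this.congr fun p hp => ?_
    have h := (ftc hΩconv hd hpf hFc hF (x := p.1) (y := p.2 - p.1) hp.1 (by simpa using hp.2.1)).2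
    rw [add_sub_cancel] at h
    exact h
  · exact ⟨seg_mem hΩconv hp.1 (by simpa using hp.2.1) ht, sub_ne_zero.2 hp.2.2.symm⟩

lemma smooth_F {n : ℕ} {Ω : Set (EE n)} (hΩ : IsOpen Ω) (hΩconv : Convex ℝ Ω)
    {d F : EE n → EE n → ℝ}
    (hd : IsAsymmetricMetric n Ω d) (hpf : IsProjFlatMetric n Ω d) (hF : HasInf n Ω d F)
    (hs : ContDiffOn ℝ (⊤ : ℕ∞) (fun p : EE n × EE n => d p.1 p.2)
      {p : EE n × EE n | p.1 ∈ Ω ∧ p.2 ∈ Ω ∧ p.1 ≠ p.2}) :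
    ContDiffOn ℝ (⊤ : ℕ∞) (fun p : EE n × EE n => F p.1 p.2) (Ω ×ˢ {y | y ≠ 0}) := by
  have hU : IsOpen {p : EE n × EE n | p.1 ∈ Ω ∧ p.2 ∈ Ω ∧ p.1 ≠ p.2} :=
    (hΩ.preimage continuous_fst).inter ((hΩ.preimage continuous_snd).inter
      (isOpen_ne_fun continuous_fst continuous_snd))
  set U := {p : EE n × EE n | p.1 ∈ Ω ∧ p.2 ∈ Ω ∧ p.1 ≠ p.2} with hUdef
  set D : EE n × EE n → ℝ := fun p => d p.1 p.2 with hD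
  rintro ⟨x₀, y₀⟩ ⟨hx₀, hy₀⟩
  apply ContDiffAt.contDiffWithinAt
  obtain ⟨τ, hτ0, hτ⟩ : ∃ τ : ℝ, 0 < τ ∧ x₀ - τ • y₀ ∈ Ω := by
    have h1 := (ev_mem hΩ hx₀ (-y₀)).filter_mono (nhdsWithin_le_nhds (s := Ioi (0:ℝ)))
    obtain ⟨τ, h2, h3⟩ := (h1.and self_mem_nhdsWithin).exists
    exact ⟨τ, h3, by simpa [sub_eq_add_neg] using h2⟩
  set Φ : EE n × EE n → EE n × EE n := fun p => (p.1 - τ • p.2, p.1) with hΦ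
  have hΦs : ContDiff ℝ (⊤ : ℕ∞) Φ := by fun_prop
  have hN : IsOpen (Φ ⁻¹' U) := hU.preimage hΦs.continuous
  have hne : ∀ x y : EE n, x - τ • y ≠ x ↔ y ≠ 0 := by
    intro x y
    simp [hτ0.ne']
  have hmem : (x₀, y₀) ∈ Φ ⁻¹' U := ⟨hτ, hx₀, (hne _ _).2 hy₀⟩
  have hfd : ContDiffOn ℝ (⊤ : ℕ∞) (fderiv ℝ D) U := ((contDiffOn_infty_iff_fderiv_of_isOpen hU).1 hs).2
  have hH : ContDiffOn ℝ (⊤ : ℕ∞) (fun p : EE n × EE n => fderiv ℝ D (Φ p) (0, p.2)) (Φ ⁻¹' U) :=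
    (hfd.comp hΦs.contDiffOn (fun q hq => hq)).clm_apply (by fun_prop)
  refine (hH.congr fun p hp => ?_).contDiffAt (hN.mem_nhds hmem)
  obtain ⟨x, y⟩ := p
  obtain ⟨h1, h2, h3⟩ := hp
  simp only [hΦ] at h1 h2 h3 ⊢
  set z := x - τ • y with hz
  have hzx : z + τ • y = x := by rw [hz]; abel
  have hDz : HasFDerivAt D (fderiv ℝ D (z, x)) (z, x) :=
    ((hs.differentiableOn (by simp)).differentiableAt (hU.mem_nhds ⟨h1, h2, h3⟩)).hasFDerivAt
  have hc : HasDerivAt (fun t : ℝ => (z, z + t • y)) ((0 : EE n), y) τ := by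
    have : HasDerivAt (fun t : ℝ => z + t • y) ((1:ℝ) • y) τ :=
      ((hasDerivAt_id τ).smul_const y).const_add z
    rw [one_smul] at this
    exact (hasDerivAt_const τ z).prodMk this
  have hl : HasDerivAt (fun t : ℝ => d z (z + t • y)) (fderiv ℝ D (z, x) (0, y)) τ := by
    rw [← hzx] at hDz ⊢
    exact hDz.comp_hasDerivAt τ hc
  obtain ⟨η, hη0, hη⟩ : ∃ η : ℝ, 0 < η ∧ x + η • y ∈ Ω := by
    have h1 := (ev_mem hΩ h2 y).filter_mono (nhdsWithin_le_nhds (s := Ioi (0:ℝ)))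
    obtain ⟨τ, h2, h3⟩ := (h1.and self_mem_nhdsWithin).exists
    exact ⟨τ, h3, h2⟩
  have hr := right_deriv hΩconv hd hpf hF h1 hτ0.le (T := τ + η) (y := y) (by linarith)
    (by rw [add_smul, ← add_assoc, hzx]; exact hη)
  rw [hzx] at hr
  exact (uniqueDiffWithinAt_Ioi τ).eq_deriv _ hr hl.hasDerivWithinAt

end Helpers

/-- A projectively flat asymmetric metric `d` on a convex domain `Ω` is
induced by a pseudo-norm function satisfying the weak Lipschitz condition if and only if the
two-sided comparison and Lipschitz estimates (B) hold locally; moreover, for any such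
inducing pseudo-norm function `F`, `d` is `C^∞` off the diagonal iff `F` is `C^∞` on
`Ω × (ℝⁿ \ {0})`. -/
theorem stmt_6 (n : ℕ) (hn : 1 ≤ n)
    (Ω : Set (EuclideanSpace ℝ (Fin n))) (hΩne : Ω.Nonempty)
    (hΩopen : IsOpen Ω) (hΩconv : Convex ℝ Ω)
    (d : EuclideanSpace ℝ (Fin n) → EuclideanSpace ℝ (Fin n) → ℝ)
    (hd : IsAsymmetricMetric n Ω d) (hpf : IsProjFlatMetric n Ω d) :
    ((∃ F, IsPseudoNormFunction n Ω F ∧ WeakLipschitz n Ω F ∧ InducesDist n Ω F d) ↔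
      (∀ x ∈ Ω, ∃ r : ℝ, 0 < r ∧ ∃ c : ℝ, 0 < c ∧ ∃ C : ℝ, 0 < C ∧
        Metric.ball x r ⊆ Ω ∧
        ∀ x₁ ∈ Metric.ball x r, ∀ x₂ ∈ Metric.ball x r,
          (c * ‖x₂ - x₁‖ ≤ d x₁ x₂ ∧ d x₁ x₂ ≤ C * ‖x₂ - x₁‖) ∧
          ∀ y : EuclideanSpace ℝ (Fin n), x₁ + y ∈ Metric.ball x r →
            x₂ + y ∈ Metric.ball x r →
            |d x₁ (x₁ + y) - d x₂ (x₂ + y)| ≤ C * ‖y‖ * ‖x₂ - x₁‖)) ∧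
    (∀ F, IsPseudoNormFunction n Ω F → WeakLipschitz n Ω F → InducesDist n Ω F d →
      (ContDiffOn ℝ (⊤ : ℕ∞)
          (fun p : EuclideanSpace ℝ (Fin n) × EuclideanSpace ℝ (Fin n) => d p.1 p.2)
          {p : EuclideanSpace ℝ (Fin n) × EuclideanSpace ℝ (Fin n) |
            p.1 ∈ Ω ∧ p.2 ∈ Ω ∧ p.1 ≠ p.2} ↔
        ContDiffOn ℝ (⊤ : ℕ∞)
          (fun p : EuclideanSpace ℝ (Fin n) × EuclideanSpace ℝ (Fin n) => F p.1 p.2)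
          (Ω ×ˢ {y | y ≠ 0}))) := by
  refine ⟨⟨?_, ?_⟩, ?_⟩
  · rintro ⟨F, hF, hW, hI⟩
    exact condB_of_A hΩopen hΩconv hd hpf hF hW hI
  · intro hB
    exact A_of_condB hΩopen hΩconv hd hpf hB
  · intro F hF _ hI
    have hinf := hasInf_of_induces hΩopen hΩconv hF hI
    exact ⟨smooth_F hΩopen hΩconv hd hpf hinf, smooth_d hΩopen hΩconv hd hpf hF.1 hinf⟩

end
end

section
/- Let n ≥ 1 and let a ∈ ℝⁿ with ‖a‖ < 1; define the Randers norm φ(y) := ‖y‖ + ⟨a,y⟩ and Ω := {x ∈ ℝⁿ : φ(x) < 1}. For x, y ∈ ℝⁿ set ℬ(x) := (1 − ⟨a,x⟩)² − ‖x‖², 𝒜(x,y) := ((1 − ⟨a,x⟩)² − ‖x‖²)·(‖y‖² − ⟨a,y⟩²) + (⟨x,y⟩ + (1 − ⟨a,x⟩)·⟨a,y⟩)², and 𝒞(x,y) := (1 − ⟨a,x⟩)·⟨a,y⟩. Then for every (x,y) ∈ Ω × ℝⁿ: ℬ(x) > 0, 𝒜(x,y) ≥ 0, and there exists a unique t ∈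 ℝ with t = φ(y + t•x), given explicitly by t = (√(𝒜(x,y)) + 𝒞(x,y) + ⟨x,y⟩) / ℬ(x). (This is the Funk metric of the Randers domain Ω.) -/
open scoped RealInnerProductSpace

/-- The Funk metric of a Randers domain: for the Randers norm
`φ(y) = ‖y‖ + ⟨a,y⟩` with `‖a‖ < 1` and any `x` with `φ(x) < 1`, the equation
`t = φ(y + t•x)` has a unique solution, given by the explicit formula
`t = (√𝒜 + 𝒞 + ⟨x,y⟩)/ℬ`; moreover `ℬ(x) > 0` and `𝒜(x,y) ≥ 0`. -/
theorem stmt_7 (n : ℕ) (hn : 1 ≤ n)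
    (a : EuclideanSpace ℝ (Fin n)) (ha : ‖a‖ < 1)
    (x y : EuclideanSpace ℝ (Fin n)) (hx : ‖x‖ + ⟪a, x⟫ < 1) :
    0 < (1 - ⟪a, x⟫) ^ 2 - ‖x‖ ^ 2 ∧
    0 ≤ ((1 - ⟪a, x⟫) ^ 2 - ‖x‖ ^ 2) * (‖y‖ ^ 2 - ⟪a, y⟫ ^ 2) +
        (⟪x, y⟫ + (1 - ⟪a, x⟫) * ⟪a, y⟫) ^ 2 ∧
    ∀ t : ℝ,
      t = ‖y + t • x‖ + ⟪a, y + t • x⟫ ↔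
      t = (Real.sqrt (((1 - ⟪a, x⟫) ^ 2 - ‖x‖ ^ 2) * (‖y‖ ^ 2 - ⟪a, y⟫ ^ 2) +
              (⟪x, y⟫ + (1 - ⟪a, x⟫) * ⟪a, y⟫) ^ 2) +
            (1 - ⟪a, x⟫) * ⟪a, y⟫ + ⟪x, y⟫) /
          ((1 - ⟪a, x⟫) ^ 2 - ‖x‖ ^ 2) := by
  have hq : |⟪a, y⟫| ≤ ‖y‖ := by
    have h1 := abs_real_inner_le_norm a y
    nlinarith [norm_nonneg y]
  have hz : ‖(1 - ⟪a, x⟫) • y + ⟪a, y⟫ • x‖ ^ 2 =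
      (1 - ⟪a, x⟫) ^ 2 * ‖y‖ ^ 2 + 2 * (1 - ⟪a, x⟫) * ⟪a, y⟫ * ⟪x, y⟫ + ⟪a, y⟫ ^ 2 * ‖x‖ ^ 2 := by
    rw [norm_add_sq_real, norm_smul, norm_smul, real_inner_smul_left, real_inner_smul_right,
      mul_pow, mul_pow, Real.norm_eq_abs, Real.norm_eq_abs, sq_abs, sq_abs, real_inner_comm y x]
    ring
  have hv : |⟪x, (1 - ⟪a, x⟫) • y + ⟪a, y⟫ • x⟫| ≤
      ‖x‖ * ‖(1 - ⟪a, x⟫) • y + ⟪a, y⟫ • x‖ := abs_real_inner_le_norm _ _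
  rw [inner_add_right, real_inner_smul_right, real_inner_smul_right,
    real_inner_self_eq_norm_sq] at hv
  have hN : ∀ t : ℝ, ‖y + t • x‖ ^ 2 = ‖y‖ ^ 2 + 2 * t * ⟪x, y⟫ + t ^ 2 * ‖x‖ ^ 2 := by
    intro t
    rw [norm_add_sq_real, norm_smul, real_inner_smul_right,
      mul_pow, Real.norm_eq_abs, sq_abs, real_inner_comm y x]
    ring
  have hI : ∀ t : ℝ, ⟪a, y + t • x⟫ = ⟪a, y⟫ + t * ⟪a, x⟫ := by
    intro t
    rw [inner_add_right, real_inner_smul_right]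
  simp only [hI]
  have hX := norm_nonneg x
  have hw := norm_nonneg ((1 - ⟪a, x⟫) • y + ⟪a, y⟫ • x)
  have hN0 : ∀ t : ℝ, 0 ≤ ‖y + t • x‖ := fun t => norm_nonneg _
  generalize ‖(1 - ⟪a, x⟫) • y + ⟪a, y⟫ • x‖ = w at *
  generalize (⟪a, y⟫ : ℝ) = q at *
  generalize (⟪x, y⟫ : ℝ) = s at *
  obtain ⟨u, hu⟩ : ∃ u : ℝ, u = 1 - ⟪a, x⟫ := ⟨_, rfl⟩
  have hp : (⟪a, x⟫ : ℝ) = 1 - u := by linarith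
  rw [hp] at hx hz hv
  simp only [hp, sub_sub_cancel] at *
  generalize ‖x‖ = X at *
  generalize ‖y‖ = Y at *
  have hXu : X < u := by linarith
  have hB : 0 < u ^ 2 - X ^ 2 := by nlinarith
  have hqY : 0 ≤ Y ^ 2 - q ^ 2 := by
    have := sq_le_sq' (abs_le.1 hq).1 (abs_le.1 hq).2
    linarith
  have hA : 0 ≤ (u ^ 2 - X ^ 2) * (Y ^ 2 - q ^ 2) + (s + u * q) ^ 2 := by positivity
  refine ⟨hB, hA, fun t => ?_⟩
  have hR0 := Real.sqrt_nonneg ((u ^ 2 - X ^ 2) * (Y ^ 2 - q ^ 2) + (s + u * q) ^ 2)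
  have hR2 := Real.sq_sqrt hA
  generalize Real.sqrt ((u ^ 2 - X ^ 2) * (Y ^ 2 - q ^ 2) + (s + u * q) ^ 2) = R at *
  rw [eq_div_iff hB.ne']
  have hu0 : 0 < u := by linarith
  have hkey : (u * R) ^ 2 = (u ^ 2 - X ^ 2) * w ^ 2 + (u * s + q * X ^ 2) ^ 2 := by
    rw [mul_pow, hR2, hz]; ring
  have hNt := hN t
  have hN0t := hN0 t
  generalize ‖y + t • x‖ = N at *
  have huR : 0 ≤ u * R := by positivity
  have hBw : 0 ≤ (u ^ 2 - X ^ 2) * w ^ 2 := by positivity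
  constructor
  · intro h
    have hNe : N = u * t - q := by linarith
    have hD : (t * (u ^ 2 - X ^ 2) - (u * q + s) - R) *
        (t * (u ^ 2 - X ^ 2) - (u * q + s) + R) = 0 := by
      rw [hNe] at hNt
      linear_combination (u ^ 2 - X ^ 2) * hNt - hR2
    rcases mul_eq_zero.1 hD with h1 | h1
    · linarith
    · have h2 : u * R ≤ u * s + q * X ^ 2 := by
        have h3 : 0 ≤ (u ^ 2 - X ^ 2) * (u * t - q) := mul_nonneg hB.le (hNe ▸ hN0t)
        have h4 : (u ^ 2 - X ^ 2) * (u * t - q) = - (u * R) + (u * s + q * X ^ 2) := by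
          linear_combination u * h1
        linarith
      have h5 : (u ^ 2 - X ^ 2) * w ^ 2 = 0 := by nlinarith
      have h6 : w = 0 := by
        rcases mul_eq_zero.1 h5 with h | h
        · linarith
        · exact pow_eq_zero_iff (two_ne_zero) |>.1 h
      rw [h6, mul_zero] at hv
      have h7 := (abs_le.1 hv).2
      have h8 : u * R = 0 := by linarith
      have h9 : R = 0 := by
        rcases mul_eq_zero.1 h8 with h | h
        · linarith
        · exact h
      linarith
  · intro h
    have h1 : -(u * R) ≤ u * s + q * X ^ 2 :=
      (abs_le.1 (abs_le_of_sq_le_sq (by linarith) huR)).1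
    have h2 : 0 ≤ u * t - q := by
      have h4 : (u ^ 2 - X ^ 2) * (u * t - q) = u * R + (u * s + q * X ^ 2) := by
        linear_combination u * h
      exact nonneg_of_mul_nonneg_right (by rw [h4]; linarith) hB
    have h3 : N ^ 2 = (u * t - q) ^ 2 := by
      apply mul_left_cancel₀ hB.ne'
      rw [hNt]
      linear_combination - (t * (u ^ 2 - X ^ 2) - (u * q + s) + R) * h - hR2
    have h4 : N = u * t - q := (pow_left_inj₀ hN0t h2 two_ne_zero).1 h3
    linarith
end

section
/- Let n ≥ 1, let b ∈ ℝ, and let x, y ∈ ℝⁿ with |b|·‖x‖ < 1. Then there exists a unique t ∈ ℝ satisfying t = b·‖y + t•x‖, and it is given explicitly by t = (b·√((1 − b²·‖x‖²)·‖y‖² + b²·⟨x,y⟩²) + b²·⟨x,y⟩) / (1 − b²·‖x‖²). -/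
open scoped RealInnerProductSpace

/-- For `|b|·‖x‖ < 1`, the equation `t = b·‖y + t•x‖` has a unique
solution, given explicitly by
`t = (b·√((1 − b²‖x‖²)‖y‖² + b²⟨x,y⟩²) + b²⟨x,y⟩)/(1 − b²‖x‖²)`. -/
theorem stmt_8 (n : ℕ) (hn : 1 ≤ n) (b : ℝ)
    (x y : EuclideanSpace ℝ (Fin n)) (h : |b| * ‖x‖ < 1) :
    ∀ t : ℝ,
      t = b * ‖y + t • x‖ ↔
      t = (b * Real.sqrt ((1 - b ^ 2 * ‖x‖ ^ 2) * ‖y‖ ^ 2 + b ^ 2 * ⟪x, y⟫ ^ 2) +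
            b ^ 2 * ⟪x, y⟫) / (1 - b ^ 2 * ‖x‖ ^ 2) := by
  intro t
  have hx := norm_nonneg x
  have hbx : 0 ≤ |b| * ‖x‖ := by positivity
  have hA : 0 < 1 - b ^ 2 * ‖x‖ ^ 2 := by
    have : b ^ 2 * ‖x‖ ^ 2 = (|b| * ‖x‖) ^ 2 := by rw [mul_pow, sq_abs]
    rw [this]; nlinarith
  have hN : ∀ s : ℝ, ‖y + s • x‖ ^ 2 = ‖y‖ ^ 2 + 2 * s * ⟪x, y⟫ + s ^ 2 * ‖x‖ ^ 2 := by
    intro s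
    rw [norm_add_sq_real, norm_smul, mul_pow, Real.norm_eq_abs, sq_abs, inner_smul_right,
      real_inner_comm]
    ring
  have hCS : b * ⟪x, y + t • x⟫ ≤ |b| * ‖x‖ * ‖y + t • x‖ := by
    calc b * ⟪x, y + t • x⟫ ≤ |b * ⟪x, y + t • x⟫| := le_abs_self _
      _ = |b| * |⟪x, y + t • x⟫| := abs_mul _ _
      _ ≤ |b| * (‖x‖ * ‖y + t • x‖) := by
        gcongr
        exact abs_real_inner_le_norm _ _
      _ = _ := by ring
  have hI : ⟪x, y + t • x⟫ = ⟪x, y⟫ + t * ‖x‖ ^ 2 := by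
    rw [inner_add_right, inner_smul_right, real_inner_self_eq_norm_sq]
  rw [hI] at hCS
  have hNt := hN t
  have hN0 := norm_nonneg (y + t • x)
  set N := ‖y + t • x‖
  set q := ⟪x, y⟫
  set A := 1 - b ^ 2 * ‖x‖ ^ 2 with hAdef
  have hR : 0 ≤ A * ‖y‖ ^ 2 + b ^ 2 * q ^ 2 := by positivity
  constructor
  · intro ht
    have h1 : 0 ≤ A * N - b * q := by
      have : A * N - b * q = N - b * (q + b * N * ‖x‖ ^ 2) := by rw [hAdef]; ring
      rw [this, ← ht]
      nlinarith
    have h2 : A * ‖y‖ ^ 2 + b ^ 2 * q ^ 2 = (A * N - b * q) ^ 2 := by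
      rw [ht] at hNt
      have : A * N ^ 2 - 2 * b * q * N = ‖y‖ ^ 2 := by rw [hAdef]; linarith
      rw [← this]; ring
    rw [h2, Real.sqrt_sq h1, eq_div_iff hA.ne']
    linear_combination A * ht
  · intro ht
    have hS := Real.sq_sqrt hR
    have hS1 : |b * q| ≤ √(A * ‖y‖ ^ 2 + b ^ 2 * q ^ 2) := by
      apply Real.abs_le_sqrt
      have : 0 ≤ A * ‖y‖ ^ 2 := by positivity
      nlinarith
    set S := √(A * ‖y‖ ^ 2 + b ^ 2 * q ^ 2)
    have hs0 : 0 ≤ (S + b * q) / A := by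
      apply div_nonneg _ hA.le
      linarith [neg_abs_le (b * q)]
    have hts : t = b * ((S + b * q) / A) := by rw [ht]; ring
    have hAs : A * ((S + b * q) / A) = S + b * q := by field_simp
    set s := (S + b * q) / A
    have hS2 : S = A * s - b * q := by linarith
    have h3 : A * (A * s ^ 2 - 2 * b * q * s - ‖y‖ ^ 2) = 0 := by
      rw [hS2] at hS; linear_combination hS
    have h4 := (mul_eq_zero.mp h3).resolve_left hA.ne'
    have h5 : N ^ 2 = s ^ 2 := by
      rw [hNt, hts]; rw [hAdef] at h4; linear_combination -h4
    have h6 : N = s := (sq_eq_sq₀ hN0 hs0).mp h5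
    rw [h6]; exact hts
end

section
/- Let a < 0 and let f : ℝ → ℝ be three times continuously differentiable on the interval (a, +∞), with f(0) = 0, f′(0) = 1, f′(t) > 0 for all t > a, and 2·f′′′(t)·f′(t) − 3·f′′(t)² = 0 for all t > a. Then either f(t) = t for all t ≥ 0, or there exists a constant c > 0 such that f(t) = c·t/(c + t) for all t ≥ 0. -/
theorem const_aux (F : ℝ → ℝ) (h : ∀ t : ℝ, 0 ≤ t → HasDerivAt F 0 t) (t : ℝ) (ht : 0 ≤ t) :
    F t = F 0 := by
  refine constant_of_has_deriv_right_zero (a := 0) (b := t) ?_ ?_ t ⟨ht, le_rfl⟩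
  · intro x hx
    exact (h x hx.1).continuousAt.continuousWithinAt
  · intro x hx
    exact (h x hx.1).hasDerivWithinAt

/-- Classification of solutions of the geodesic ODE
`2f‴f′ − 3(f″)² = 0` with `f(0) = 0`, `f′(0) = 1` and `f′ > 0` on `(a, ∞)` (where `a < 0`):
on `[0, ∞)` either `f(t) = t`, or `f(t) = c·t/(c + t)` for some constant `c > 0`. -/
theorem stmt_9 (a : ℝ) (ha : a < 0) (f : ℝ → ℝ)
    (hf : ContDiffOn ℝ 3 f (Set.Ioi a))
    (hf0 : f 0 = 0) (hf'0 : deriv f 0 = 1)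
    (hf'pos : ∀ t ∈ Set.Ioi a, 0 < deriv f t)
    (hode : ∀ t ∈ Set.Ioi a,
      2 * deriv (deriv (deriv f)) t * deriv f t - 3 * (deriv (deriv f) t) ^ 2 = 0) :
    (∀ t : ℝ, 0 ≤ t → f t = t) ∨
      ∃ c : ℝ, 0 < c ∧ ∀ t : ℝ, 0 ≤ t → f t = c * t / (c + t) := by
  have c2 : ContDiffOn ℝ 2 (deriv f) (Set.Ioi a) :=
    hf.deriv_of_isOpen isOpen_Ioi (by norm_num)
  have c1 : ContDiffOn ℝ 1 (deriv (deriv f)) (Set.Ioi a) :=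
    c2.deriv_of_isOpen isOpen_Ioi (by norm_num)
  have mem : ∀ t : ℝ, 0 ≤ t → t ∈ Set.Ioi a := fun t ht => lt_of_lt_of_le ha ht
  have d0 : ∀ t : ℝ, 0 ≤ t → HasDerivAt f (deriv f t) t := fun t ht =>
    ((hf.differentiableOn (by norm_num)).differentiableAt
      (isOpen_Ioi.mem_nhds (mem t ht))).hasDerivAt
  have d1 : ∀ t : ℝ, 0 ≤ t → HasDerivAt (deriv f) (deriv (deriv f) t) t := fun t ht =>
    ((c2.differentiableOn (by norm_num)).differentiableAt
      (isOpen_Ioi.mem_nhds (mem t ht))).hasDerivAt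
  have d2 : ∀ t : ℝ, 0 ≤ t →
      HasDerivAt (deriv (deriv f)) (deriv (deriv (deriv f)) t) t := fun t ht =>
    ((c1.differentiableOn (by norm_num)).differentiableAt
      (isOpen_Ioi.mem_nhds (mem t ht))).hasDerivAt
  have pos : ∀ t : ℝ, 0 ≤ t → 0 < deriv f t := fun t ht => hf'pos t (mem t ht)
  have ode := fun t ht => hode t (mem t ht)
  clear hode hf'pos c1 c2 hf
  generalize deriv (deriv (deriv f)) = g2 at *
  generalize deriv (deriv f) = g1 at *
  generalize deriv f = g at *
  have ds : ∀ t : ℝ, 0 ≤ t → HasDerivAt (fun t => √(g t)) (g1 t / (2 * √(g t))) t :=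
    fun t ht => (d1 t ht).sqrt (pos t ht).ne'
  have sp : ∀ t : ℝ, 0 ≤ t → 0 < √(g t) := fun t ht => Real.sqrt_pos.2 (pos t ht)
  have ss : ∀ t : ℝ, 0 ≤ t → √(g t) ^ 2 = g t := fun t ht => Real.sq_sqrt (pos t ht).le
  have q := const_aux (fun t => g1 t / (√(g t)) ^ 3) (by
    intro t ht
    have h := (d2 t ht).div ((ds t ht).pow 3) (pow_pos (sp t ht) 3).ne'
    refine h.congr_deriv ?_
    have o := ode t ht
    rw [← ss t ht] at o
    have p := sp t ht
    simp only [Pi.pow_apply]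
    generalize √(g t) = s at *
    field_simp
    norm_num
    linear_combination s ^ 2 * o)
  have s0 : √(g 0) = 1 := by rw [hf'0]; simp
  obtain ⟨k, hk⟩ : ∃ k, k = -(g1 0) / 2 := ⟨_, rfl⟩
  have q' : ∀ t : ℝ, 0 ≤ t → g1 t = -2 * k * √(g t) ^ 3 := by
    intro t ht
    have := q t ht
    simp only [s0] at this
    rw [div_eq_iff (pow_pos (sp t ht) 3).ne'] at this
    rw [this, hk]; ring
  have r := const_aux (fun t => (√(g t))⁻¹ - k * t) (by
    intro t ht
    have h := ((ds t ht).inv (sp t ht).ne').sub ((hasDerivAt_id t).const_mul k)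
    refine h.congr_deriv ?_
    rw [q' t ht]
    have p := sp t ht
    field_simp
    ring)
  have r' : ∀ t : ℝ, 0 ≤ t → (√(g t))⁻¹ = 1 + k * t := by
    intro t ht
    have := r t ht
    simp only [s0] at this
    linarith
  have lp : ∀ t : ℝ, 0 ≤ t → 0 < 1 + k * t := by
    intro t ht
    rw [← r' t ht]; exact inv_pos.2 (sp t ht)
  have k0 : 0 ≤ k := by
    by_contra! hneg
    have := lp (-1 / k) (div_nonneg_of_nonpos (by norm_num) hneg.le)
    rw [mul_div_cancel₀ _ hneg.ne] at this
    norm_num at this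
  have fin := const_aux (fun t => f t - t / (1 + k * t)) (by
    intro t ht
    have h := (d0 t ht).sub ((hasDerivAt_id t).div
      (((hasDerivAt_id t).const_mul k).const_add 1) (lp t ht).ne')
    refine h.congr_deriv ?_
    have p := lp t ht
    have e : g t = ((1 + k * t)⁻¹) ^ 2 := by
      rw [← r' t ht, inv_inv, ss t ht]
    rw [e]
    simp only [id]
    field_simp
    ring)
  have fin' : ∀ t : ℝ, 0 ≤ t → f t = t / (1 + k * t) := by
    intro t ht
    have := fin t ht
    simp only [hf0] at this
    simp at this
    linarith
  rcases k0.eq_or_lt with h | h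
  · left
    intro t ht
    rw [fin' t ht, ← h]; simp
  · right
    refine ⟨k⁻¹, inv_pos.2 h, fun t ht => ?_⟩
    rw [fin' t ht]
    have := lp t ht
    field_simp
end

section
/- Let a < 0 and let f : ℝ → ℝ be three times continuously differentiable on the interval (a, +∞), with f(0) = 0, f′(0) = 1, f′(t) > 0 for all t > a, and 2·f′′′(t)·f′(t) − 3·f′′(t)² = −4·f′(t)² for all t > a. Then one of the following holds: (1) f(t) = (e^{2t} − 1)/2 for all t ≥ 0; (2) f(t) = (1 − e^{−2t})/2 for all t ≥ 0; (3) there exists c ∈ ℝ with c < 0 or c > 1 such that f(t) = (c − 1)·(e^{2t} − 1)/(2·(c·e^{2t} − 1)) for all t ≥ 0. -/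
theorem const_aux_s10 (a : ℝ) (ha : a < 0) (F : ℝ → ℝ)
    (h : ∀ t ∈ Set.Ioi a, HasDerivAt F 0 t) : ∀ t ∈ Set.Ioi a, F t = F 0 := by
  intro t ht
  exact IsOpen.is_const_of_deriv_eq_zero isOpen_Ioi isPreconnected_Ioi
    (fun x hx => (h x hx).differentiableAt.differentiableWithinAt)
    (fun x hx => (h x hx).deriv) ht ha

/-- Classification of solutions of the geodesic ODE
`2f‴f′ − 3(f″)² = −4(f′)²` with `f(0) = 0`, `f′(0) = 1` and `f′ > 0` on `(a, ∞)` (where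
`a < 0`): on `[0, ∞)` one has `f(t) = (e^{2t} − 1)/2`, or `f(t) = (1 − e^{−2t})/2`, or
`f(t) = (c − 1)(e^{2t} − 1)/(2(c·e^{2t} − 1))` for some constant `c < 0` or `c > 1`. -/
theorem stmt_10 (a : ℝ) (ha : a < 0) (f : ℝ → ℝ)
    (hf : ContDiffOn ℝ 3 f (Set.Ioi a))
    (hf0 : f 0 = 0) (hf'0 : deriv f 0 = 1)
    (hf'pos : ∀ t ∈ Set.Ioi a, 0 < deriv f t)
    (hode : ∀ t ∈ Set.Ioi a,
      2 * deriv (deriv (deriv f)) t * deriv f t - 3 * (deriv (deriv f) t) ^ 2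
        = -4 * (deriv f t) ^ 2) :
    (∀ t : ℝ, 0 ≤ t → f t = (Real.exp (2 * t) - 1) / 2) ∨
    (∀ t : ℝ, 0 ≤ t → f t = (1 - Real.exp (-2 * t)) / 2) ∨
    ∃ c : ℝ, (c < 0 ∨ 1 < c) ∧
      ∀ t : ℝ, 0 ≤ t →
        f t = (c - 1) * (Real.exp (2 * t) - 1) / (2 * (c * Real.exp (2 * t) - 1)) := by
  have d1 : DifferentiableOn ℝ f (Set.Ioi a) := hf.differentiableOn (by norm_num)
  have c2 : ContDiffOn ℝ 2 (deriv f) (Set.Ioi a) := hf.deriv_of_isOpen isOpen_Ioi (by norm_num)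
  have c3 : ContDiffOn ℝ 1 (deriv (deriv f)) (Set.Ioi a) :=
    c2.deriv_of_isOpen isOpen_Ioi (by norm_num)
  have h1 : ∀ t ∈ Set.Ioi a, HasDerivAt f (deriv f t) t := fun t ht =>
    (d1.differentiableAt (isOpen_Ioi.mem_nhds ht)).hasDerivAt
  have h2 : ∀ t ∈ Set.Ioi a, HasDerivAt (deriv f) (deriv (deriv f) t) t := fun t ht =>
    ((c2.differentiableOn (by norm_num)).differentiableAt (isOpen_Ioi.mem_nhds ht)).hasDerivAt
  have h3 : ∀ t ∈ Set.Ioi a,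
      HasDerivAt (deriv (deriv f)) (deriv (deriv (deriv f)) t) t := fun t ht =>
    ((c3.differentiableOn (by norm_num)).differentiableAt (isOpen_Ioi.mem_nhds ht)).hasDerivAt
  generalize deriv (deriv (deriv f)) = k at *
  generalize deriv (deriv f) = h at *
  generalize deriv f = g at *
  obtain ⟨q, hq⟩ : ∃ q : ℝ → ℝ, q = fun t => -(h t) / (2 * g t) := ⟨_, rfl⟩
  obtain ⟨u, hu⟩ : ∃ u : ℝ → ℝ, u = fun t => Real.exp (-Real.log (g t) / 2) := ⟨_, rfl⟩
  have hq' : ∀ t ∈ Set.Ioi a, HasDerivAt q (1 - q t ^ 2) t := by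
    intro t ht
    have hg := (hf'pos t ht)
    have := (h3 t ht).neg.div ((h2 t ht).const_mul 2) (by positivity)
    rw [hq]
    refine this.congr_deriv ?_
    have ho := hode t ht
    simp only [Pi.neg_apply]
    field_simp
    linarith
  have hu' : ∀ t ∈ Set.Ioi a, HasDerivAt u (q t * u t) t := by
    intro t ht
    have hg := (hf'pos t ht)
    have := (((h2 t ht).log hg.ne').neg.div_const 2).exp
    rw [hu, hq]
    refine this.congr_deriv ?_
    simp only [Pi.neg_apply]
    field_simp
  have hug : ∀ t ∈ Set.Ioi a, g t * u t ^ 2 = 1 := by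
    intro t ht
    have hg := (hf'pos t ht)
    rw [hu]
    simp only
    rw [← Real.exp_nat_mul]
    have : ((2:ℕ):ℝ) * (-Real.log (g t) / 2) = - Real.log (g t) := by push_cast; ring
    rw [this, Real.exp_neg, Real.exp_log hg]
    field_simp
  have hupos : ∀ t, 0 < u t := fun t => by rw [hu]; exact Real.exp_pos _
  have hu0 : u 0 = 1 := by rw [hu]; simp [hf'0]
  have hP := const_aux_s10 a ha (fun t => Real.exp (-t) * (u t * (1 + q t))) (by
    intro t ht
    refine (((hasDerivAt_id t).neg.exp).mul
      ((hu' t ht).mul ((hq' t ht).const_add 1))).congr_deriv ?_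
    simp
    ring)
  have hQ := const_aux_s10 a ha (fun t => Real.exp t * (u t * (1 - q t))) (by
    intro t ht
    refine ((Real.hasDerivAt_exp t).mul
      ((hu' t ht).mul ((hq' t ht).const_sub 1))).congr_deriv ?_
    simp
    ring)
  simp only [neg_zero, Real.exp_zero, hu0, one_mul] at hP hQ
  obtain ⟨A, hA⟩ : ∃ A, A = (1 + q 0) / 2 := ⟨_, rfl⟩
  have hE : ∀ t, Real.exp (2 * t) = Real.exp t ^ 2 := fun t => by
    rw [← Real.exp_nat_mul]; norm_num
  have key : ∀ t ∈ Set.Ioi a, u t * Real.exp t = A * Real.exp (2 * t) + (1 - A) := by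
    intro t ht
    have p := hP t ht
    have r := hQ t ht
    have e := Real.exp_pos t
    rw [Real.exp_neg] at p
    field_simp at p
    rw [hE, hA]
    linear_combination (Real.exp t) / 2 * p + r / 2
  have kpos : ∀ t ∈ Set.Ioi a, 0 < A * Real.exp (2 * t) + (1 - A) := fun t ht => by
    rw [← key t ht]; exact mul_pos (hupos t) (Real.exp_pos t)
  have hf1 := const_aux_s10 a ha
    (fun t => f t - (Real.exp (2 * t) - 1) / (2 * (A * Real.exp (2 * t) + (1 - A)))) (by
    intro t ht
    have hk := kpos t ht
    have hexp : HasDerivAt (fun t => Real.exp (2 * t)) (Real.exp (2 * t) * (2 * 1)) t :=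
      ((hasDerivAt_id t).const_mul 2).exp
    refine ((h1 t ht).sub ((hexp.sub_const 1).div
      (((hexp.const_mul A).add_const (1 - A)).const_mul 2) (by positivity))).congr_deriv ?_
    have e1 : g t * (A * Real.exp (2 * t) + (1 - A)) ^ 2 = Real.exp (2 * t) := by
      rw [← key t ht, hE]
      linear_combination Real.exp t ^ 2 * hug t ht
    have e2 : g t = Real.exp (2 * t) / (A * Real.exp (2 * t) + (1 - A)) ^ 2 := by
      rw [eq_div_iff (by positivity)]; exact e1
    rw [e2]
    field_simp
    ring)
  have sol : ∀ t : ℝ, 0 ≤ t →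
      f t = (Real.exp (2 * t) - 1) / (2 * (A * Real.exp (2 * t) + (1 - A))) := by
    intro t ht
    have := hf1 t (lt_of_lt_of_le ha ht)
    simp [hf0] at this
    linarith
  have hA0 : 0 ≤ A := by
    by_contra hneg
    push Not at hneg
    have hi : A⁻¹ < 0 := inv_lt_zero.mpr hneg
    have hl : 0 ≤ Real.log (1 - A⁻¹) := Real.log_nonneg (by linarith)
    have := kpos (Real.log (1 - A⁻¹) / 2) (lt_of_lt_of_le ha (by positivity))
    rw [mul_div_cancel₀ _ (by norm_num : (2:ℝ) ≠ 0), Real.exp_log (by linarith)] at this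
    have h' : A * A⁻¹ = 1 := mul_inv_cancel₀ hneg.ne
    linarith
  rcases hA0.eq_or_lt with h0 | hApos
  · left
    intro t ht
    rw [sol t ht, ← h0]; simp
  by_cases hA1 : A = 1
  · right; left
    intro t ht
    have e := Real.exp_pos (2 * t)
    rw [sol t ht, hA1, neg_mul, Real.exp_neg]
    field_simp
    ring
  · right; right
    have hne : A - 1 ≠ 0 := sub_ne_zero.mpr hA1
    refine ⟨A / (A - 1), ?_, ?_⟩
    · rcases lt_or_gt_of_ne hA1 with hl | hl
      · left; exact div_neg_of_pos_of_neg hApos (by linarith)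
      · right; rw [lt_div_iff₀ (by linarith)]; linarith
    · intro t ht
      have hk := kpos t (lt_of_lt_of_le ha ht)
      have e1 : A / (A - 1) - 1 = 1 / (A - 1) := by field_simp; ring
      have e2 : A / (A - 1) * Real.exp (2 * t) - 1
          = (A * Real.exp (2 * t) + (1 - A)) / (A - 1) := by field_simp; ring
      rw [sol t ht, e1, e2]
      field_simp
end

section
/- Let J ⊆ ℝ be an open interval containing 0 and let f : ℝ → ℝ be three times continuously differentiable on J, with f(0) = 0, f′(0) = 1, f′(t) > 0 for all t ∈ J, and 2·f′′′(t)·f′(t) − 3·f′′(t)² = 4·f′(t)² for all t ∈ J. Then there exists c ∈ (−π/2, π/2) such that J ⊆ (−π/2 − c, π/2 − c) and f(t) = cos²(c)·(tan(t + c) − tan(c)) for all t ∈ J. -/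
open Real

theorem aux_const (a b : ℝ) (ha : a < 0) (hb : 0 < b) (g : ℝ → ℝ)
    (hg : ∀ t ∈ Set.Ioo a b, HasDerivAt g 0 t) : ∀ t ∈ Set.Ioo a b, g t = g 0 := by
  intro t ht
  exact isOpen_Ioo.is_const_of_deriv_eq_zero isPreconnected_Ioo
    (fun x hx => (hg x hx).differentiableAt.differentiableWithinAt)
    (fun x hx => (hg x hx).deriv) ht ⟨ha, hb⟩

/-- Classification of solutions of the geodesic ODE
`2f‴f′ − 3(f″)² = 4(f′)²` with `f(0) = 0`, `f′(0) = 1` and `f′ > 0` on an open interval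
`J = (a, b)` containing `0`: there is `c ∈ (−π/2, π/2)` with
`J ⊆ (−π/2 − c, π/2 − c)` and `f(t) = cos²(c)·(tan(t + c) − tan(c))` on `J`. -/
theorem stmt_11 (a b : ℝ) (ha : a < 0) (hb : 0 < b) (f : ℝ → ℝ)
    (hf : ContDiffOn ℝ 3 f (Set.Ioo a b))
    (hf0 : f 0 = 0) (hf'0 : deriv f 0 = 1)
    (hf'pos : ∀ t ∈ Set.Ioo a b, 0 < deriv f t)
    (hode : ∀ t ∈ Set.Ioo a b,
      2 * deriv (deriv (deriv f)) t * deriv f t - 3 * (deriv (deriv f) t) ^ 2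
        = 4 * (deriv f t) ^ 2) :
    ∃ c : ℝ, c ∈ Set.Ioo (-(π / 2)) (π / 2) ∧
      Set.Ioo a b ⊆ Set.Ioo (-(π / 2) - c) (π / 2 - c) ∧
      ∀ t ∈ Set.Ioo a b, f t = Real.cos c ^ 2 * (Real.tan (t + c) - Real.tan c) := by
  have h1 : ContDiffOn ℝ 2 (deriv f) (Set.Ioo a b) :=
    hf.deriv_of_isOpen isOpen_Ioo (by norm_num)
  have h2 : ContDiffOn ℝ 1 (deriv (deriv f)) (Set.Ioo a b) :=
    h1.deriv_of_isOpen isOpen_Ioo (by norm_num)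
  have d0 : ∀ t ∈ Set.Ioo a b, HasDerivAt f (deriv f t) t := fun t ht =>
    ((hf.differentiableOn (by norm_num)).differentiableAt (isOpen_Ioo.mem_nhds ht)).hasDerivAt
  have d1 : ∀ t ∈ Set.Ioo a b, HasDerivAt (deriv f) (deriv (deriv f) t) t := fun t ht =>
    ((h1.differentiableOn (by norm_num)).differentiableAt (isOpen_Ioo.mem_nhds ht)).hasDerivAt
  have d2 : ∀ t ∈ Set.Ioo a b, HasDerivAt (deriv (deriv f)) (deriv (deriv (deriv f)) t) t :=
    fun t ht =>
    ((h2.differentiableOn (by norm_num)).differentiableAt (isOpen_Ioo.mem_nhds ht)).hasDerivAt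
  generalize deriv (deriv (deriv f)) = r at *
  generalize deriv (deriv f) = q at *
  generalize deriv f = p at *
  have du : ∀ t ∈ Set.Ioo a b,
      HasDerivAt (fun t => Real.arctan (q t / (2 * p t)) - t) 0 t := by
    intro t ht
    have hp := hf'pos t ht
    have ho := hode t ht
    have h := (((d2 t ht).div ((d1 t ht).const_mul 2) (by positivity)).arctan).sub
      (hasDerivAt_id t)
    refine h.congr_deriv ?_
    simp only [Pi.div_apply]
    have : 0 < 1 + (q t / (2 * p t)) ^ 2 := by positivity
    rw [sub_eq_zero, div_mul_eq_mul_div, one_mul, div_eq_one_iff_eq this.ne']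
    field_simp
    linear_combination ho
  have hc := aux_const a b ha hb _ du
  set c := Real.arctan (q 0 / (2 * p 0)) with hcdef
  have hat : ∀ t ∈ Set.Ioo a b, Real.arctan (q t / (2 * p t)) = t + c := by
    intro t ht
    have := hc t ht
    simp only [sub_zero] at this
    linarith
  have hcos : ∀ t ∈ Set.Ioo a b, 0 < Real.cos (t + c) := by
    intro t ht
    rw [← hat t ht]
    exact Real.cos_arctan_pos _
  have hq : ∀ t ∈ Set.Ioo a b, q t * Real.cos (t + c) = 2 * p t * Real.sin (t + c) := by
    intro t ht
    have hp := hf'pos t ht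
    have hk := hcos t ht
    have : q t / (2 * p t) = Real.tan (t + c) := by rw [← hat t ht, Real.tan_arctan]
    rw [Real.tan_eq_sin_div_cos, div_eq_div_iff (by positivity) hk.ne'] at this
    linarith
  have dp : ∀ t ∈ Set.Ioo a b, HasDerivAt (fun t => p t * Real.cos (t + c) ^ 2) 0 t := by
    intro t ht
    have h := (d1 t ht).mul ((((hasDerivAt_id t).add_const c).cos).pow 2)
    refine h.congr_deriv ?_
    simp
    linear_combination Real.cos (t + c) * hq t ht
  have hpc := aux_const a b ha hb _ dp
  have df : ∀ t ∈ Set.Ioo a b,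
      HasDerivAt (fun t => f t - Real.cos c ^ 2 * Real.tan (t + c)) 0 t := by
    intro t ht
    have hk := hcos t ht
    have h3 := HasDerivAt.comp t (Real.hasDerivAt_tan hk.ne') ((hasDerivAt_id t).add_const c)
    have h := (d0 t ht).sub (h3.const_mul (Real.cos c ^ 2))
    refine h.congr_deriv ?_
    have := hpc t ht
    simp only [zero_add, hf'0, one_mul] at this
    rw [← this, id]
    field_simp
    ring
  have hfc := aux_const a b ha hb _ df
  refine ⟨c, ⟨Real.neg_pi_div_two_lt_arctan _, Real.arctan_lt_pi_div_two _⟩, ?_, ?_⟩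
  · intro t ht
    have e := hat t ht
    have e1 := Real.neg_pi_div_two_lt_arctan (q t / (2 * p t))
    have e2 := Real.arctan_lt_pi_div_two (q t / (2 * p t))
    constructor <;> linarith
  · intro t ht
    have := hfc t ht
    simp only [zero_add, hf0] at this
    linear_combination this
end

section
/- Let n ≥ 1 and define p : ℝⁿ → ℝⁿ × ℝ by p(x) := (1 + ‖x‖²)^{−1/2} • (x, 1), where ℝⁿ × ℝ carries the Euclidean norm ‖(z,s)‖ = √(‖z‖² + s²). Then for every a, b ∈ ℝⁿ with b ≠ 0 there exists a linear subspace Π ⊆ ℝⁿ × ℝ of dimension 2 such that the image p '' {a + t•b : t ∈ ℝ} equals {w ∈ Π : ‖w‖ = 1 and the last (ℝ-)coordinate of w is positive}. In other words, the image under p of any affine line in ℝⁿ is the open upper half of a great circle of the unit sphere in ℝⁿ × ℝ ≅ ℝ^{n+1}. -/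
/-- The image, under the map `p(x) = (x,1)/√(1+‖x‖²)` from `ℝⁿ` to the
upper hemisphere of the unit sphere of `ℝⁿ × ℝ ≅ ℝ^{n+1}`, of any affine line is the open
upper half of a great circle: the set of unit vectors with positive last coordinate in a
2-dimensional linear subspace. -/
theorem stmt_12 (n : ℕ) (hn : 1 ≤ n)
    (a b : EuclideanSpace ℝ (Fin n)) (hb : b ≠ 0) :
    ∃ P : Submodule ℝ (EuclideanSpace ℝ (Fin n) × ℝ),
      Module.finrank ℝ P = 2 ∧
      (fun x : EuclideanSpace ℝ (Fin n) =>
          (Real.sqrt (1 + ‖x‖ ^ 2))⁻¹ • ((x, 1) : EuclideanSpace ℝ (Fin n) × ℝ)) ''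
        {z | ∃ t : ℝ, z = a + t • b} =
      {w : EuclideanSpace ℝ (Fin n) × ℝ | w ∈ P ∧ ‖w.1‖ ^ 2 + w.2 ^ 2 = 1 ∧ 0 < w.2} := by
  have hli : LinearIndependent ℝ
      ![((a, 1) : EuclideanSpace ℝ (Fin n) × ℝ), ((b, 0) : EuclideanSpace ℝ (Fin n) × ℝ)] := by
    rw [LinearIndependent.pair_iff]
    intro s t h
    have h2 := congrArg Prod.snd h
    have h1 := congrArg Prod.fst h
    simp at h2
    subst h2
    simp [hb] at h1
    exact ⟨rfl, h1⟩
  refine ⟨Submodule.span ℝ {(a, 1), (b, 0)}, ?_, ?_⟩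
  · have h := finrank_span_eq_card hli
    rw [Matrix.range_cons_cons_empty] at h
    simpa using h
  · ext w
    simp only [Set.mem_image, Set.mem_ofPred_eq, Submodule.mem_span_pair]
    constructor
    · rintro ⟨x, ⟨t, rfl⟩, rfl⟩
      have hpos : 0 < 1 + ‖a + t • b‖ ^ 2 := by positivity
      have hs : 0 < (Real.sqrt (1 + ‖a + t • b‖ ^ 2))⁻¹ := inv_pos.mpr (Real.sqrt_pos.mpr hpos)
      have hsq : (Real.sqrt (1 + ‖a + t • b‖ ^ 2))⁻¹ ^ 2 * (1 + ‖a + t • b‖ ^ 2) = 1 := by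
        rw [inv_pow, Real.sq_sqrt hpos.le, inv_mul_cancel₀ hpos.ne']
      generalize (Real.sqrt (1 + ‖a + t • b‖ ^ 2))⁻¹ = r at hs hsq
      refine ⟨⟨r, r * t, ?_⟩, ?_, ?_⟩
      · ext1
        · simp [smul_add, mul_smul]
        · simp
      · simp only [Prod.smul_mk, norm_smul, smul_eq_mul, mul_one, Real.norm_eq_abs, mul_pow, sq_abs]
        linarith
      · simpa using hs
    · rintro ⟨⟨s, t, rfl⟩, h1, h2⟩
      simp only [Prod.smul_mk, Prod.mk_add_mk, smul_eq_mul, mul_one, mul_zero, add_zero] at h1 h2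
      have hx : s • a + t • b = s • (a + (t / s) • b) := by
        rw [smul_add, smul_smul, mul_div_cancel₀ _ h2.ne']
      refine ⟨a + (t / s) • b, ⟨t / s, rfl⟩, ?_⟩
      rw [hx, norm_smul, mul_pow, Real.norm_eq_abs, sq_abs] at h1
      have h3 : 1 + ‖a + (t / s) • b‖ ^ 2 = (s⁻¹) ^ 2 := by
        field_simp
        linarith
      rw [h3, Real.sqrt_sq (inv_pos.mpr h2).le, inv_inv]
      simp only [Prod.smul_mk, Prod.mk_add_mk, smul_eq_mul, mul_one, mul_zero, add_zero, hx]
end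

section
/- Let n ≥ 2, let ψ : ℝⁿ → ℝ be a Minkowski norm, let φ : ℝⁿ → ℝ be a weak Minkowski norm, and set Ω := {x ∈ ℝⁿ : φ(x) < 1}. Let P : Ω × ℝⁿ → ℝ be the unique function satisfying P(x,y) = φ(y + P(x,y)•x) for all (x,y) ∈ Ω × ℝⁿ, and suppose (as holds automatically) that P is C^∞ on Ω × (ℝⁿ \ {0}). Define F : Ω × (ℝⁿ \ {0}) → ℝ by F(x,y) := ψ(y + P(x,y)•x)·(1 + (D_yP)(x,y)(x)), where (D_yP)(x,y) is the Fréchet derivative of z ↦ P(x,z) at z = y. Then for every y ∈ ℝⁿ \ {0} and every μ ∈ ℝ with μ•y ∈ Ω, the second Fréchet derivative of the function z ↦ F(μ•y, z)² at z = y is positive definite. -/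
open Filter Topology

theorem aux_line {E : Type*} [NormedAddCommGroup E] [NormedSpace ℝ E] (f : E → ℝ) (y θ : E)
    (hf : ContDiffAt ℝ 2 f y) (g : ℝ → ℝ) (hg : ∀ᶠ t in 𝓝 (0:ℝ), f (y + t • θ) = g t)
    (g' : ℝ → ℝ) (hg' : ∀ᶠ t in 𝓝 (0:ℝ), HasDerivAt g (g' t) t) (a : ℝ)
    (ha : HasDerivAt g' a 0) : iteratedFDeriv ℝ 2 f y ![θ, θ] = a := by
  have hl : ∀ t : ℝ, HasDerivAt (fun t : ℝ => y + t • θ) θ t := fun t => by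
    simpa using ((hasDerivAt_id t).smul_const θ).const_add y
  have hc : Tendsto (fun t : ℝ => y + t • θ) (𝓝 0) (𝓝 y) := by
    have := (hl 0).continuousAt.tendsto
    simpa using this
  have h1 : ∀ᶠ z in 𝓝 y, DifferentiableAt ℝ f z := by
    filter_upwards [hf.eventually (by simp)] with z hz
    exact hz.differentiableAt (by simp)
  have h2 : DifferentiableAt ℝ (fderiv ℝ f) y :=
    (hf.fderiv_right (m := 1) (by norm_num)).differentiableAt (by simp)
  have h3 : ∀ᶠ t in 𝓝 (0:ℝ), fderiv ℝ f (y + t • θ) θ = g' t := by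
    filter_upwards [hc.eventually h1, hg.eventually_nhds, hg'] with t ht hgt hgt'
    have e1 : HasDerivAt (fun t : ℝ => f (y + t • θ)) (fderiv ℝ f (y + t • θ) θ) t :=
      ht.hasFDerivAt.comp_hasDerivAt t (hl t)
    have e2 : HasDerivAt (fun t : ℝ => f (y + t • θ)) (g' t) t :=
      hgt'.congr_of_eventuallyEq hgt
    exact e1.unique e2
  have h4 : HasDerivAt (fun t : ℝ => fderiv ℝ f (y + t • θ) θ) (fderiv ℝ (fderiv ℝ f) y θ θ) 0 := by
    have h2' : HasFDerivAt (fderiv ℝ f) (fderiv ℝ (fderiv ℝ f) y) (y + (0:ℝ) • θ) := by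
      simpa using h2.hasFDerivAt
    have e : HasDerivAt (fun t : ℝ => fderiv ℝ f (y + t • θ)) (fderiv ℝ (fderiv ℝ f) y θ) 0 :=
      h2'.comp_hasDerivAt (0:ℝ) (hl 0)
    exact (ContinuousLinearMap.apply ℝ ℝ θ).hasFDerivAt.comp_hasDerivAt (0:ℝ) e
  have h5 := h4.unique (ha.congr_of_eventuallyEq h3)
  rw [iteratedFDeriv_two_apply]
  simpa using h5

theorem aux_scalar (m m' m'' h h' : ℝ → ℝ) (h2 : ℝ)
    (hm : ∀ᶠ t in 𝓝 (0:ℝ), HasDerivAt m (m' t) t)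
    (hm' : ∀ᶠ t in 𝓝 (0:ℝ), HasDerivAt m' (m'' t) t)
    (hm'' : DifferentiableAt ℝ m'' 0)
    (hh : ∀ᶠ t in 𝓝 (0:ℝ), HasDerivAt h (h' t) t)
    (hh' : HasDerivAt h' h2 0) (m0 : 0 < m 0) :
    ∃ f' : ℝ → ℝ, (∀ᶠ t in 𝓝 (0:ℝ),
      HasDerivAt (fun t => m t ^ 2 * h (t / m t) * (m t - t * m' t) ^ 2) (f' t) t) ∧
      HasDerivAt f' (m 0 ^ 2 * (2 * h 0 * m' 0 ^ 2 + 2 * h' 0 * m' 0 + h2)) 0 := by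
  have dm := hm.self_of_nhds
  have dm' := hm'.self_of_nhds
  have dh := hh.self_of_nhds
  have hmpos : ∀ᶠ t in 𝓝 (0:ℝ), 0 < m t := dm.continuousAt.eventually (lt_mem_nhds m0)
  have du : ∀ t, 0 < m t → HasDerivAt m (m' t) t →
      HasDerivAt (fun t => t / m t) ((m t - t * m' t) / m t ^ 2) t := fun t ht hd => by
    have := (hasDerivAt_id' t).fun_div hd ht.ne'
    simpa only [one_mul] using this
  have du0 := du 0 m0 dm
  have hu : Tendsto (fun t => t / m t) (𝓝 0) (𝓝 0) := by
    have := du0.continuousAt.tendsto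
    simpa using this
  refine ⟨fun t => (2 * m t * m' t * h (t / m t) + (m t - t * m' t) * h' (t / m t)) *
      (m t - t * m' t) ^ 2 + m t ^ 2 * h (t / m t) * (2 * (m t - t * m' t) * (- (t * m'' t))), ?_, ?_⟩
  · filter_upwards [hm, hm', hmpos, hu.eventually hh] with t a b c d
    have e1 := ((a.pow 2).mul (d.comp t (du t c a))).mul
      ((a.sub ((hasDerivAt_id t).mul b)).pow 2)
    refine e1.congr_deriv ?_
    simp only [Function.comp_def, Pi.mul_apply, Pi.pow_apply, Pi.sub_apply, id]
    field_simp
    norm_num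
    ring
  · have d : HasDerivAt h (h' 0) (0 / m 0) := by simpa using dh
    have d' : HasDerivAt h' h2 (0 / m 0) := by simpa using hh'
    have dr := dm.sub ((hasDerivAt_id (0:ℝ)).mul dm')
    have dk := d.comp (0:ℝ) du0
    have dk' := d'.comp (0:ℝ) du0
    have e := ((((dm.const_mul 2).mul dm').mul dk).add (dr.mul dk')).mul (dr.pow 2) |>.add
      (((dm.pow 2).mul dk).mul ((dr.const_mul 2).mul
        ((hasDerivAt_id (0:ℝ)).mul hm''.hasDerivAt).neg))
    refine e.congr_deriv ?_
    simp [Function.comp_def]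
    field_simp
    ring

theorem aux_le : (2 : WithTop ℕ∞) ≤ ((⊤ : ℕ∞) : WithTop ℕ∞) := by
  have h : ((2 : ℕ∞) : WithTop ℕ∞) ≤ ((⊤ : ℕ∞) : WithTop ℕ∞) := WithTop.coe_le_coe.mpr le_top
  exact h

theorem aux_smooth (g : ℝ → ℝ) (hg : ContDiffAt ℝ (⊤ : ℕ∞) g 0) :
    (∀ᶠ t in 𝓝 (0:ℝ), HasDerivAt g (deriv g t) t) ∧ ContDiffAt ℝ (⊤ : ℕ∞) (deriv g) 0 := by
  constructor
  · have h2 : ContDiffAt ℝ 1 g 0 := hg.of_le (by exact_mod_cast le_top)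
    filter_upwards [h2.eventually (by simp)] with t ht
    exact (ht.differentiableAt (by simp)).hasDerivAt
  · have : ContDiffAt ℝ (⊤ : ℕ∞) (fderiv ℝ g) 0 := hg.fderiv_right (by simp)
    exact this.clm_apply contDiffAt_const

/-- (Key lemma for `𝐊 = 0`.) Let `ψ` be a Minkowski norm, `φ` a weak
Minkowski norm, `Ω = {φ < 1}`, `P` the (smooth) unique solution of `P = φ(y + P•x)`, and
`F(x,y) = ψ(y + P(x,y)•x)·(1 + D_yP(x,y)(x))`. Then along any ray through the origin,
i.e. at points `x = μ•y ∈ Ω`, the second derivative of `F(μ•y, ·)²` at `y` is positive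
definite. -/
theorem stmt_14 (n : ℕ) (hn : 2 ≤ n)
    (ψ φ : EuclideanSpace ℝ (Fin n) → ℝ)
    -- `ψ` is a Minkowski norm
    (hψhom : ∀ α : ℝ, 0 < α → ∀ y, ψ (α • y) = α * ψ y)
    (hψpos : ∀ y : EuclideanSpace ℝ (Fin n), y ≠ 0 → 0 < ψ y)
    (hψsmooth : ContDiffOn ℝ (⊤ : ℕ∞) ψ {y | y ≠ 0})
    (hψpd : ∀ y : EuclideanSpace ℝ (Fin n), y ≠ 0 →
      ∀ θ : EuclideanSpace ℝ (Fin n), θ ≠ 0 →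
        0 < iteratedFDeriv ℝ 2 (fun z => ψ z ^ 2) y ![θ, θ])
    -- `φ` is a weak Minkowski norm
    (hφhom : ∀ α : ℝ, 0 < α → ∀ y, φ (α • y) = α * φ y)
    (hφpos : ∀ y : EuclideanSpace ℝ (Fin n), y ≠ 0 → 0 < φ y)
    (hφsmooth : ContDiffOn ℝ (⊤ : ℕ∞) φ {y | y ≠ 0})
    (hφsub : ∀ y₁ y₂, φ (y₁ + y₂) ≤ φ y₁ + φ y₂)
    (hφreg : ∀ y₁ y₂, φ (y₁ + y₂) = φ y₁ + φ y₂ →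
      ∃ (v : EuclideanSpace ℝ (Fin n)) (c₁ c₂ : ℝ),
        0 ≤ c₁ ∧ 0 ≤ c₂ ∧ y₁ = c₁ • v ∧ y₂ = c₂ • v)
    -- `P` is the unique solution of the Funk-type equation on `Ω = {φ < 1}`
    (P : EuclideanSpace ℝ (Fin n) → EuclideanSpace ℝ (Fin n) → ℝ)
    (hP : ∀ x, φ x < 1 → ∀ y, P x y = φ (y + P x y • x))
    (hPuniq : ∀ x, φ x < 1 → ∀ y, ∀ t : ℝ, t = φ (y + t • x) → t = P x y)
    (hPsmooth : ContDiffOn ℝ (⊤ : ℕ∞)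
      (fun p : EuclideanSpace ℝ (Fin n) × EuclideanSpace ℝ (Fin n) => P p.1 p.2)
      ({x | φ x < 1} ×ˢ {y | y ≠ 0}))
    -- `F` is the associated projectively flat metric
    (F : EuclideanSpace ℝ (Fin n) → EuclideanSpace ℝ (Fin n) → ℝ)
    (hF : ∀ x, φ x < 1 → ∀ y : EuclideanSpace ℝ (Fin n), y ≠ 0 →
      F x y = ψ (y + P x y • x) * (1 + fderiv ℝ (fun z => P x z) y x)) :
    ∀ y : EuclideanSpace ℝ (Fin n), y ≠ 0 → ∀ μ : ℝ, φ (μ • y) < 1 →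
      ∀ θ : EuclideanSpace ℝ (Fin n), θ ≠ 0 →
        0 < iteratedFDeriv ℝ 2 (fun z => F (μ • y) z ^ 2) y ![θ, θ] := by
  intro y hy μ hμ θ hθ
  have hφ0 : φ 0 = 0 := by
    have := hφhom 2 (by norm_num) 0
    simp at this; linarith
  have hopen : IsOpen {z : EuclideanSpace ℝ (Fin n) | z ≠ 0} := isOpen_ne
  have hφnn : ∀ z, 0 ≤ φ z := fun z => by
    by_cases hz : z = 0
    · rw [hz, hφ0]
    · exact (hφpos z hz).le
  set x := μ • y with hx
  set p : EuclideanSpace ℝ (Fin n) → ℝ := fun z => P x z with hp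
  have hpy : 0 ≤ p y := by
    have : p y = _ := hP x hμ y
    rw [this]; exact hφnn _
  have hphom : ∀ α : ℝ, 0 < α → ∀ z, p (α • z) = α * p z := by
    intro α hα z
    symm
    apply hPuniq x hμ
    have h1 : α • z + (α * p z) • x = α • (z + p z • x) := by
      module
    rw [h1, hφhom α hα]
    congr 1
    exact hP x hμ z
  have hpsm : ContDiffOn ℝ (⊤ : ℕ∞) p {z | z ≠ 0} := by
    have h1 : ContDiffOn ℝ (⊤ : ℕ∞)
      (fun z : EuclideanSpace ℝ (Fin n) => (x, z)) {z | z ≠ 0} :=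
      (contDiff_const.prodMk contDiff_id).contDiffOn
    exact hPsmooth.comp h1 (fun z hz => ⟨hμ, hz⟩)
  have hpat : ∀ z, z ≠ 0 → ContDiffAt ℝ (⊤ : ℕ∞) p z := fun z hz =>
    hpsm.contDiffAt (hopen.mem_nhds hz)
  have hψat : ∀ z, z ≠ 0 → ContDiffAt ℝ (⊤ : ℕ∞) ψ z := fun z hz =>
    hψsmooth.contDiffAt (hopen.mem_nhds hz)
  have hpd : ∀ z, z ≠ 0 → HasFDerivAt p (fderiv ℝ p z) z := fun z hz =>
    ((hpat z hz).differentiableAt (by simp)).hasFDerivAt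
  -- Euler
  have heuler : ∀ z, z ≠ 0 → fderiv ℝ p z z = p z := by
    intro z hz
    have h1 : HasDerivAt (fun α : ℝ => α • z) z 1 := by
      simpa using (hasDerivAt_id (1:ℝ)).smul_const z
    have h2 : HasFDerivAt p (fderiv ℝ p z) ((1:ℝ) • z) := by simpa using hpd z hz
    have h3 := h2.comp_hasDerivAt (1:ℝ) h1
    have h4 : HasDerivAt (fun α : ℝ => α * p z) (p z) 1 := by
      simpa using (hasDerivAt_id (1:ℝ)).mul_const (p z)
    refine h3.unique (h4.congr_of_eventuallyEq ?_)
    filter_upwards [lt_mem_nhds (show (0:ℝ) < 1 by norm_num)] with α hα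
    exact hphom α hα z
  -- positivity of l
  have hl : 0 < 1 + μ * p y := by
    have hpe : p y = φ ((1 + μ * p y) • y) := by
      have h1 : y + p y • x = (1 + μ * p y) • y := by
        rw [hx, smul_smul, add_smul, one_smul, mul_comm]
      rw [← h1]; exact hP x hμ y
    by_contra hcon
    have hcon := not_lt.mp hcon
    rcases hcon.eq_or_lt with h0 | h0
    · rw [h0, zero_smul, hφ0] at hpe
      rw [hpe] at h0; norm_num at h0
    · have hμneg : μ < 0 := by
        by_contra hh
        have := mul_nonneg (not_lt.mp hh) hpy
        linarith
      have h1 : (1 + μ * p y) • y = (-(1 + μ * p y)) • (-y) := by module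
      have h2 : x = (-μ) • (-y) := by simp [hx]
      rw [h1, hφhom _ (by linarith)] at hpe
      rw [h2, hφhom _ (by linarith)] at hμ
      have := hφpos (-y) (neg_ne_zero.mpr hy)
      nlinarith
  -- the one-dimensional data
  have hlinec : ContDiff ℝ (⊤ : ℕ∞) (fun t : ℝ => y + t • θ) := by fun_prop
  have hld : ∀ (θ : EuclideanSpace ℝ (Fin n)) (t : ℝ), HasDerivAt (fun t : ℝ => y + t • θ) θ t :=
    fun θ t => by
      simpa using ((hasDerivAt_id t).smul_const θ).const_add y
  have hline0 : ∀ᶠ t in 𝓝 (0:ℝ), y + t • θ ≠ 0 := by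
    have h1 : ContinuousAt (fun t : ℝ => y + t • θ) 0 := hlinec.continuous.continuousAt
    refine h1.eventually_ne ?_
    simpa using hy
  have hgat : ContDiffAt ℝ (⊤ : ℕ∞) (fun t : ℝ => p (y + t • θ)) 0 :=
    ContDiffAt.comp (0:ℝ) (by simpa using hpat y hy) hlinec.contDiffAt
  set m : ℝ → ℝ := fun t => 1 + μ * p (y + t • θ) with hm
  have hmat : ContDiffAt ℝ (⊤ : ℕ∞) m 0 := contDiffAt_const.add (contDiffAt_const.mul hgat)
  have hm0 : 0 < m 0 := by simpa [hm] using hl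
  have hm0e : m 0 = 1 + μ * p y := by simp [hm]
  have hΨat : ∀ z, z ≠ 0 → ContDiffAt ℝ (⊤ : ℕ∞) (fun z => ψ z ^ 2) z :=
    fun z hz => (hψat z hz).pow 2
  set h : ℝ → ℝ := fun s => ψ (y + s • θ) ^ 2 with hh
  have hhat : ContDiffAt ℝ (⊤ : ℕ∞) h 0 :=
    ContDiffAt.comp (g := fun z => ψ z ^ 2) (0:ℝ) (by simpa using hΨat y hy) hlinec.contDiffAt
  obtain ⟨am, am1⟩ := aux_smooth m hmat
  obtain ⟨am', am2⟩ := aux_smooth _ am1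
  obtain ⟨ah, ah1⟩ := aux_smooth h hhat
  have ah2 := (ah1.differentiableAt (by simp)).hasDerivAt
  have hmd : ∀ t, y + t • θ ≠ 0 → HasDerivAt m (μ * fderiv ℝ p (y + t • θ) θ) t := fun t ht =>
    (((hpd _ ht).comp_hasDerivAt t (hld θ t)).const_mul μ).const_add 1
  set c := deriv m 0 with hc
  have hcv : c = μ * fderiv ℝ p y θ := by
    have := (hmd 0 (by simpa using hy)).deriv
    simpa using this
  -- positivity of the quadratic form
  have hη : θ + c • y ≠ 0 := by
    intro h0
    have h1 : θ = (-c) • y := by rw [neg_smul]; exact eq_neg_of_add_eq_zero_left h0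
    have h2 : c = μ * (-c * p y) := by
      conv_lhs => rw [hcv, h1]
      rw [map_smul, heuler y hy, smul_eq_mul]
    have h3 : c * (1 + μ * p y) = 0 := by linear_combination h2
    have h4 : c = 0 := by
      rcases mul_eq_zero.mp h3 with h | h
      · exact h
      · exact absurd h hl.ne'
    apply hθ; rw [h1, h4]; simp
  have hQ : 0 < 2 * h 0 * c ^ 2 + 2 * deriv h 0 * c + deriv (deriv h) 0 := by
    have hdm : ∀ t : ℝ, HasDerivAt (fun s : ℝ => 1 + c * s) c t := fun t => by
      simpa using ((hasDerivAt_id t).const_mul c).const_add 1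
    obtain ⟨f', hf1, hf2⟩ := aux_scalar (fun s => 1 + c * s) (fun _ => c) (fun _ => 0) h (deriv h) _
      (Eventually.of_forall hdm) (Eventually.of_forall fun t => hasDerivAt_const t c)
      (differentiableAt_const _) ah ah2 (by simp)
    have hpos : ∀ᶠ t in 𝓝 (0:ℝ), 0 < 1 + c * t :=
      (hdm 0).continuousAt.eventually (lt_mem_nhds (by simp))
    have := aux_line (fun z => ψ z ^ 2) y (θ + c • y) ((hΨat y hy).of_le aux_le)
      _ (by
        filter_upwards [hpos] with t ht
        have e : y + t • (θ + c • y) = (1 + c * t) • (y + (t / (1 + c * t)) • θ) := by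
          rw [smul_add (1 + c * t), smul_smul, mul_div_cancel₀ _ ht.ne']
          module
        have e2 : ψ (y + t • (θ + c • y)) ^ 2
            = (1 + c * t) ^ 2 * h (t / (1 + c * t)) * (1 + c * t - t * c) ^ 2 := by
          rw [e, hψhom _ ht]; simp only [hh]; ring
        exact e2) f' hf1 _ hf2
    have h3 := hψpd y hy _ hη
    rw [this] at h3
    simpa using h3
  -- main computation
  obtain ⟨f', hf1, hf2⟩ := aux_scalar m (deriv m) (deriv (deriv m)) h (deriv h) _
    am am' (am2.differentiableAt (by simp)) ah ah2 hm0
  have hFeq : (fun z => F x z ^ 2) =ᶠ[𝓝 y]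
      fun z => (ψ (z + p z • x) * (1 + fderiv ℝ p z x)) ^ 2 := by
    filter_upwards [hopen.mem_nhds hy] with z hz
    rw [hF x hμ z hz]
  have hFat : ContDiffAt ℝ 2 (fun z => F x z ^ 2) y := by
    refine ContDiffAt.congr_of_eventuallyEq ?_ hFeq
    have h1 : ContDiffAt ℝ (⊤ : ℕ∞) (fderiv ℝ p) y := (hpat y hy).fderiv_right (by simp)
    have h2 : ContDiffAt ℝ (⊤ : ℕ∞) (fun z => z + p z • x) y :=
      contDiffAt_id.add ((hpat y hy).smul contDiffAt_const)
    have h3 : y + p y • x ≠ 0 := by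
      have e : y + p y • x = (1 + μ * p y) • y := by
        rw [hx, smul_smul, add_smul, one_smul, mul_comm]
      rw [e]; exact smul_ne_zero hl.ne' hy
    have h4 : ContDiffAt ℝ (⊤ : ℕ∞) (fun z => ψ (z + p z • x)) y :=
      ContDiffAt.comp y (hψat _ h3) h2
    have h5 : ContDiffAt ℝ (⊤ : ℕ∞)
        (fun z => (ψ (z + p z • x) * (1 + fderiv ℝ p z x)) ^ 2) y :=
      (h4.mul (contDiffAt_const.add (h1.clm_apply contDiffAt_const))).pow 2
    exact h5.of_le aux_le
  have hmpos : ∀ᶠ t in 𝓝 (0:ℝ), 0 < m t :=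
    hmat.continuousAt.eventually (lt_mem_nhds hm0)
  have key := aux_line (fun z => F x z ^ 2) y θ hFat _ (by
    filter_upwards [hmpos, hline0] with t ht hz
    have e : y + t • θ + p (y + t • θ) • x = m t • (y + (t / m t) • θ) := by
      rw [smul_add (m t), smul_smul (m t), mul_div_cancel₀ _ ht.ne', hx]
      simp only [hm]
      module
    have e1 : fderiv ℝ p (y + t • θ) x
        = μ * (p (y + t • θ) - t * fderiv ℝ p (y + t • θ) θ) := by
      have := heuler _ hz
      rw [hx, map_smul, smul_eq_mul, ← this, map_add, map_smul, smul_eq_mul]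
      ring_nf
    have e2 : F x (y + t • θ) ^ 2 = m t ^ 2 * h (t / m t) * (m t - t * deriv m t) ^ 2 := by
      rw [hF x hμ _ hz]
      change (ψ (y + t • θ + p (y + t • θ) • x) * (1 + fderiv ℝ p (y + t • θ) x)) ^ 2 = _
      rw [e, hψhom _ ht, e1, (hmd t hz).deriv]
      simp only [hh, hm]; ring
    exact e2) f' hf1 _ hf2
  rw [key]
  positivity
end

section
/- Let n ≥ 2 and let Ω ⊆ ℝⁿ be an open connected set containing 0. Let ψ̄, φ̄ : ℝⁿ → ℝ be positively 1-homogeneous and C^∞ on ℝⁿ \ {0}, with ψ̄(y) > 0, (φ̄ + ψ̄)(y) ≠ 0 and (φ̄ − ψ̄)(y) ≠ 0 for every y ≠ 0. Suppose Φ₊, Φ₋ : Ω × ℝⁿ → ℝ are C^∞ on Ω × (ℝⁿ \ {0}) and, for each (x,y) ∈ Ω × ℝⁿ, Φ₊(x,y) is the unique t ∈ ℝ with t = (φ̄ + ψ̄)(y + t•x) and Φ₋(x,y) is the unique t ∈ ℝ with t = (φ̄ − ψ̄)(y + t•x). Define F̄ := (Φ₊ − Φ₋)/2 on Ω × (ℝⁿ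 \ {0}). Then for every y ∈ ℝⁿ \ {0} the following are equivalent: (a) the second Fréchet derivative of ψ̄² at y is positive definite; (b) for every μ ∈ ℝ with μ•y ∈ Ω, the second Fréchet derivative of the function z ↦ F̄(μ•y, z)² at z = y is positive definite. -/
theorem cd_deriv {f : ℝ → ℝ} {x : ℝ} (hf : ContDiffAt ℝ 2 f x) : ContDiffAt ℝ 1 (deriv f) x := by
  have h := (hf.fderiv_right (m := 1) (by norm_num)).clm_apply
    (contDiffAt_const (c := (1:ℝ)))
  simpa using h

open Filter Topology in
theorem key_aux (p r u : ℝ → ℝ) (hp : ContDiffAt ℝ 2 p 0) (hr : ContDiffAt ℝ 2 r 0)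
    (hr0 : 0 < r 0) (hu : ∀ᶠ t in 𝓝 (0:ℝ), u t = r t * p (t / r t)) :
    deriv u 0 = deriv r 0 * p 0 + deriv p 0 ∧
    deriv (deriv u) 0 = deriv (deriv r) 0 * p 0 + deriv (deriv p) 0 / r 0 := by
  have hrd : ∀ᶠ t in 𝓝 (0:ℝ), DifferentiableAt ℝ r t :=
    (hr.eventually (by simp)).mono fun t h => h.differentiableAt (by norm_num)
  have hpd : ∀ᶠ t in 𝓝 (0:ℝ), DifferentiableAt ℝ p t :=
    (hp.eventually (by simp)).mono fun t h => h.differentiableAt (by norm_num)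
  have hrpos : ∀ᶠ t in 𝓝 (0:ℝ), 0 < r t := hr.continuousAt.eventually (lt_mem_nhds hr0)
  have hq : ContinuousAt (fun t => t / r t) 0 :=
    continuousAt_id.div hr.continuousAt hr0.ne'
  have hq' : Tendsto (fun t => t / r t) (𝓝 0) (𝓝 0) := by
    have := hq.tendsto
    simpa using this
  have hpd' := hq'.eventually hpd
  have hder : deriv u =ᶠ[𝓝 0] fun t => deriv r t * p (t / r t) +
      deriv p (t / r t) * (1 - t * deriv r t / r t) := by
    filter_upwards [hrd, hrpos, hpd', hu.eventually_nhds] with t h1 h2 h3 h4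
    have e : u =ᶠ[𝓝 t] fun t => r t * p (t / r t) := h4
    rw [e.deriv_eq]
    have hd := h1.hasDerivAt.mul
      (h3.hasDerivAt.comp t ((hasDerivAt_id t).div h1.hasDerivAt h2.ne'))
    refine hd.deriv.trans ?_
    simp
    field_simp
  have hr1 : HasDerivAt r (deriv r 0) 0 := hrd.self_of_nhds.hasDerivAt
  have hp1 : HasDerivAt p (deriv p 0) 0 := hpd.self_of_nhds.hasDerivAt
  have hr2 : HasDerivAt (deriv r) (deriv (deriv r) 0) 0 :=
    ((cd_deriv hr).differentiableAt (by norm_num)).hasDerivAt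
  have hp2 : HasDerivAt (deriv p) (deriv (deriv p) 0) 0 :=
    ((cd_deriv hp).differentiableAt (by norm_num)).hasDerivAt
  refine ⟨?_, ?_⟩
  · rw [hder.eq_of_nhds]; simp
  · rw [hder.deriv_eq]
    have hdiv : HasDerivAt (fun t => t / r t) (1 / r 0) 0 := by
      have := (hasDerivAt_id (0:ℝ)).div hr1 hr0.ne'
      refine HasDerivAt.congr_deriv this ?_
      simp only [id, zero_mul, one_mul, sub_zero]
      field_simp
    have e0 : (0:ℝ) / r 0 = 0 := by simp
    have hpc : HasDerivAt (fun t => p (t / r t)) (deriv p 0 * (1 / r 0)) 0 :=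
      HasDerivAt.comp (h₂ := p) 0 (by rw [e0]; exact hp1) hdiv
    have hp2c : HasDerivAt (fun t => deriv p (t / r t)) (deriv (deriv p) 0 * (1 / r 0)) 0 :=
      HasDerivAt.comp (h₂ := deriv p) 0 (by rw [e0]; exact hp2) hdiv
    have hlast := (((hasDerivAt_id (0:ℝ)).mul hr2).div hr1 hr0.ne').const_sub 1
    have htot := (hr2.mul hpc).add (hp2c.mul hlast)
    refine htot.deriv.trans ?_
    simp
    field_simp
    ring

theorem line_cd {E : Type*} [NormedAddCommGroup E] [NormedSpace ℝ E] {f : E → ℝ} {y : E}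
    (hf : ContDiffAt ℝ 2 f y) (θ : E) : ContDiffAt ℝ 2 (fun t : ℝ => f (y + t • θ)) 0 := by
  have h : ContDiffAt ℝ 2 (fun t : ℝ => y + t • θ) 0 := by fun_prop
  exact ContDiffAt.comp (g := f) 0 (by simpa using hf) h

open Filter Topology in
theorem line_aux {E : Type*} [NormedAddCommGroup E] [NormedSpace ℝ E] {f : E → ℝ} {y : E}
    (hf : ContDiffAt ℝ 2 f y) (θ : E) :
    iteratedFDeriv ℝ 2 f y ![θ, θ] = deriv (deriv (fun t : ℝ => f (y + t • θ))) 0 := by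
  rw [iteratedFDeriv_two_apply]
  have hl : ∀ t : ℝ, HasDerivAt (fun t : ℝ => y + t • θ) θ t := fun t => by
    simpa using ((hasDerivAt_id t).smul_const θ).const_add y
  have hfd : ∀ᶠ z in 𝓝 y, DifferentiableAt ℝ f z :=
    (hf.eventually (by simp)).mono fun t h => h.differentiableAt (by norm_num)
  have ht : Tendsto (fun t : ℝ => y + t • θ) (𝓝 0) (𝓝 y) := by
    have := (hl 0).continuousAt.tendsto
    simpa using this
  have e : deriv (fun t : ℝ => f (y + t • θ)) =ᶠ[𝓝 0] fun t => fderiv ℝ f (y + t • θ) θ := by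
    filter_upwards [ht.eventually hfd] with t h
    exact (h.hasFDerivAt.comp_hasDerivAt t (hl t)).deriv
  rw [e.deriv_eq]
  have h2 : DifferentiableAt ℝ (fderiv ℝ f) y :=
    (hf.fderiv_right (m := 1) (by norm_num)).differentiableAt (by norm_num)
  have h3 : HasFDerivAt (fderiv ℝ f) (fderiv ℝ (fderiv ℝ f) y) (y + (0:ℝ) • θ) := by
    simpa using h2.hasFDerivAt
  have h4 : HasDerivAt (fun t : ℝ => fderiv ℝ f (y + t • θ)) (fderiv ℝ (fderiv ℝ f) y θ) 0 :=
    h3.comp_hasDerivAt (0:ℝ) (hl 0)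
  have h5 : HasDerivAt (fun t : ℝ => fderiv ℝ f (y + t • θ) θ)
      (fderiv ℝ (fderiv ℝ f) y θ θ) 0 :=
    (ContinuousLinearMap.apply ℝ ℝ θ).hasFDerivAt.comp_hasDerivAt (0:ℝ) h4
  rw [h5.deriv]
  rfl

open Filter Topology in
theorem sq_aux (g : ℝ → ℝ) (hg : ContDiffAt ℝ 2 g 0) :
    deriv (deriv (fun t => g t ^ 2)) 0 = 2 * deriv g 0 ^ 2 + 2 * g 0 * deriv (deriv g) 0 := by
  have hgd : ∀ᶠ t in 𝓝 (0:ℝ), DifferentiableAt ℝ g t :=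
    (hg.eventually (by simp)).mono fun t h => h.differentiableAt (by norm_num)
  have e : deriv (fun t => g t ^ 2) =ᶠ[𝓝 0] fun t => 2 * g t * deriv g t := by
    filter_upwards [hgd] with t h
    refine (h.hasDerivAt.pow 2).deriv.trans ?_
    simp
  rw [e.deriv_eq]
  have h2 : HasDerivAt (deriv g) (deriv (deriv g) 0) 0 :=
    ((cd_deriv hg).differentiableAt (by norm_num)).hasDerivAt
  refine (((hgd.self_of_nhds.hasDerivAt.const_mul 2).mul h2).deriv).trans ?_
  ring

open Filter Topology in
theorem sub_aux (f g : ℝ → ℝ) (hf : ContDiffAt ℝ 2 f 0) (hg : ContDiffAt ℝ 2 g 0) :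
    deriv (fun t => (f t - g t) / 2) 0 = (deriv f 0 - deriv g 0) / 2 ∧
    deriv (deriv (fun t => (f t - g t) / 2)) 0
      = (deriv (deriv f) 0 - deriv (deriv g) 0) / 2 := by
  have hgd : ∀ᶠ t in 𝓝 (0:ℝ), DifferentiableAt ℝ g t :=
    (hg.eventually (by simp)).mono fun t h => h.differentiableAt (by norm_num)
  have hfd : ∀ᶠ t in 𝓝 (0:ℝ), DifferentiableAt ℝ f t :=
    (hf.eventually (by simp)).mono fun t h => h.differentiableAt (by norm_num)
  have e : deriv (fun t => (f t - g t) / 2) =ᶠ[𝓝 0] fun t => (deriv f t - deriv g t) / 2 := by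
    filter_upwards [hgd, hfd] with t h h'
    exact ((h'.hasDerivAt.sub h.hasDerivAt).div_const 2).deriv
  refine ⟨e.eq_of_nhds, ?_⟩
  rw [e.deriv_eq]
  have h2 : HasDerivAt (deriv g) (deriv (deriv g) 0) 0 :=
    ((cd_deriv hg).differentiableAt (by norm_num)).hasDerivAt
  have h3 : HasDerivAt (deriv f) (deriv (deriv f) 0) 0 :=
    ((cd_deriv hf).differentiableAt (by norm_num)).hasDerivAt
  exact ((h3.sub h2).div_const 2).deriv

/-- change of direction `θ = θ' + c y` -/
theorem shift_aux {E : Type*} [NormedAddCommGroup E] [NormedSpace ℝ E] {P : E → ℝ} {y : E}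
    (hhom : ∀ α : ℝ, 0 < α → ∀ y, P (α • y) = α * P y)
    (hP : ContDiffAt ℝ 2 P y) (θ θ' : E) (c : ℝ) (hθ : θ = θ' + c • y) :
    deriv (fun t : ℝ => P (y + t • θ)) 0 = c * P y + deriv (fun t : ℝ => P (y + t • θ')) 0 ∧
    deriv (deriv (fun t : ℝ => P (y + t • θ))) 0
      = deriv (deriv (fun t : ℝ => P (y + t • θ'))) 0 := by
  have hr : ContDiffAt ℝ 2 (fun t : ℝ => 1 + t * c) 0 := by fun_prop
  have hd : deriv (fun t : ℝ => 1 + t * c) = fun _ => c := by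
    funext t
    simpa using (((hasDerivAt_id t).mul_const c).const_add 1).deriv
  have hpos : ∀ᶠ t in nhds (0:ℝ), 0 < 1 + t * c :=
    hr.continuousAt.eventually (lt_mem_nhds (by simp))
  obtain ⟨h1, h2⟩ := key_aux (fun t : ℝ => P (y + t • θ')) (fun t : ℝ => 1 + t * c)
    (fun t : ℝ => P (y + t • θ)) (line_cd hP θ') hr (by simp) (by
      filter_upwards [hpos] with t ht
      rw [← hhom _ ht, hθ]
      congr 1
      have e : (1 + t * c) • (t / (1 + t * c)) • θ' = t • θ' := by
        rw [smul_smul, mul_div_cancel₀ _ ht.ne']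
      rw [smul_add (1 + t * c), e]
      module)
  rw [hd] at h1 h2
  refine ⟨by simpa using h1, by simpa using h2⟩

/-- branch and derivative facts for one solution -/
theorem sol_aux {E : Type*} [NormedAddCommGroup E] [NormedSpace ℝ E]
    (hrank : 1 < Module.rank ℝ E) {Ω : Set E} (hΩ : IsOpen Ω) {P : E → ℝ}
    (hhom : ∀ α : ℝ, 0 < α → ∀ y, P (α • y) = α * P y)
    (hP : ContDiffOn ℝ (⊤ : ℕ∞) P {y | y ≠ 0})
    (hne : ∀ y, y ≠ 0 → P y ≠ 0) (Φ : E → E → ℝ)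
    (hΦ : ∀ x ∈ Ω, ∀ y, Φ x y = P (y + Φ x y • x))
    (huniq : ∀ x ∈ Ω, ∀ y, ∀ t : ℝ, t = P (y + t • x) → t = Φ x y)
    (hsm : ContDiffOn ℝ (⊤ : ℕ∞) (fun p : E × E => Φ p.1 p.2) (Ω ×ˢ {y | y ≠ 0}))
    (y : E) (hy : y ≠ 0) (μ : ℝ) (hμ : μ • y ∈ Ω) :
    0 < 1 + μ * Φ (μ • y) y ∧ Φ (μ • y) y = (1 + μ * Φ (μ • y) y) * P y ∧
    ContDiffAt ℝ 2 (Φ (μ • y)) y ∧ ContDiffAt ℝ 2 P y ∧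
    ∀ θ : E, 
      deriv (fun t : ℝ => Φ (μ • y) (y + t • θ)) 0
        = (1 + μ * Φ (μ • y) y) * deriv (fun t : ℝ => P (y + t • θ)) 0 ∧
      deriv (deriv (fun t : ℝ => Φ (μ • y) (y + t • θ))) 0
        = deriv (deriv (fun t : ℝ => P (y + t • θ))) 0 := by
  have hP0 : P 0 = 0 := by
    have := hhom 2 (by norm_num) 0
    rw [smul_zero] at this; linarith
  have hopen : IsOpen {y : E | y ≠ 0} := isOpen_ne
  have hPy : ContDiffAt ℝ 2 P y :=
    (hP.contDiffAt (hopen.mem_nhds hy)).of_le (WithTop.coe_le_coe.2 (le_top : (2 : ℕ∞) ≤ ⊤))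
  have hΦy : ContDiffAt ℝ 2 (Φ (μ • y)) y := by
    have h1 : ContDiffAt ℝ 2 (fun p : E × E => Φ p.1 p.2) (μ • y, y) :=
      (hsm.contDiffAt ((hΩ.prod hopen).mem_nhds (Set.mk_mem_prod hμ hy))).of_le (WithTop.coe_le_coe.2 (le_top : (2 : ℕ∞) ≤ ⊤))
    exact ContDiffAt.comp (g := fun p : E × E => Φ p.1 p.2) (f := fun z => (μ • y, z)) y h1
      (by fun_prop)
  have hsign : 0 < P y * P (-y) := by
    have hconn : IsPreconnected {z : E | z ≠ 0} :=
      (isConnected_compl_singleton_of_one_lt_rank hrank (0:E)).isPreconnected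
    by_contra hcon
    have hny : -y ≠ 0 := neg_ne_zero.mpr hy
    have h1 := hne y hy
    have h2 := hne _ hny
    have hmem : (0:ℝ) ∈ P '' {z : E | z ≠ 0} := by
      have hc := hP.continuousOn
      rcases lt_or_gt_of_ne h1 with h | h
      · have : 0 ≤ P (-y) := by by_contra h'; push Not at h'; nlinarith
        exact hconn.intermediate_value hy hny hc ⟨h.le, this⟩
      · have : P (-y) ≤ 0 := by by_contra h'; push Not at h'; nlinarith
        exact hconn.intermediate_value hny hy hc ⟨this, h.le⟩
    obtain ⟨z, hz, hz0⟩ := hmem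
    exact hne z hz hz0
  have hsol := hΦ _ hμ y
  have huy := huniq _ hμ y
  have hvec : ∀ t : ℝ, y + t • (μ • y) = (1 + μ * t) • y := fun t => by
    rw [add_smul, one_smul, smul_smul, mul_comm]
  rw [hvec] at hsol
  generalize ha : Φ (μ • y) y = a at *
  have hpos : 0 < 1 + μ * a := by
    by_contra hcon
    rcases (not_lt.mp hcon).lt_or_eq with h | h
    · have e1 : a = -(1 + μ * a) * P (-y) := by
        rw [← hhom _ (by linarith)]
        rw [neg_smul_neg]
        exact hsol
      have e2 : μ * P (-y) < 0 := by
        by_contra h'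
        push Not at h'
        have : μ * a = -(1 + μ * a) * (μ * P (-y)) := by
          rw [mul_left_comm, ← e1]
        nlinarith
      have e3 : μ * P y < 0 := by
        by_contra h'
        push Not at h'
        have h3 : 0 ≤ μ * P y * -(μ * P (-y)) := mul_nonneg h' (by linarith)
        have h4 : μ ≠ 0 := by rintro rfl; simp at e2
        have h5 : 0 < μ ^ 2 := by positivity
        nlinarith [mul_pos h5 hsign]
      have e4 : 0 < 1 - μ * P y := by linarith
      have e5 : 1 + μ * (P y / (1 - μ * P y)) = 1 / (1 - μ * P y) := by field_simp; ring
      have e6 := huy (P y / (1 - μ * P y)) (by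
        rw [hvec, e5, hhom _ (by positivity)]; ring)
      rw [e6] at e5
      have : 0 < 1 / (1 - μ * P y) := by positivity
      linarith
    · rw [h, zero_smul, hP0] at hsol
      rw [hsol] at h; simp at h
  have heq : a = (1 + μ * a) * P y := by rw [← hhom _ hpos]; exact hsol
  refine ⟨hpos, heq, hΦy, hPy, fun θ => ?_⟩
  have hu := line_cd hΦy θ
  have hr : ContDiffAt ℝ 2 (fun t : ℝ => 1 + μ * Φ (μ • y) (y + t • θ)) 0 :=
    contDiffAt_const.add (contDiffAt_const.mul hu)
  have hr0 : 0 < (fun t : ℝ => 1 + μ * Φ (μ • y) (y + t • θ)) 0 := by simpa [ha] using hpos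
  have hrpos : ∀ᶠ t in nhds (0:ℝ), 0 < (fun t : ℝ => 1 + μ * Φ (μ • y) (y + t • θ)) t :=
    hr.continuousAt.eventually (lt_mem_nhds hr0)
  have hd : deriv (fun t : ℝ => 1 + μ * Φ (μ • y) (y + t • θ)) =
      fun t => μ * deriv (fun t : ℝ => Φ (μ • y) (y + t • θ)) t := by
    funext t
    rw [deriv_const_add, deriv_const_mul_field]
  obtain ⟨h1, h2⟩ := key_aux (fun t : ℝ => P (y + t • θ)) _
    (fun t : ℝ => Φ (μ • y) (y + t • θ)) (line_cd hPy θ) hr hr0 (by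
      filter_upwards [hrpos] with t ht
      have := hΦ _ hμ (y + t • θ)
      rw [← hhom _ ht]
      refine this.trans ?_
      congr 1
      have e : (1 + μ * Φ (μ • y) (y + t • θ)) • (t / (1 + μ * Φ (μ • y) (y + t • θ))) • θ
          = t • θ := by
        rw [smul_smul, mul_div_cancel₀ _ ht.ne']
      rw [smul_add, e]
      module)
  rw [hd] at h1 h2
  rw [deriv_const_mul_field] at h2
  simp only [zero_smul, add_zero, ha] at h1 h2
  have hA : (1 + μ * a) * (1 - μ * P y) = 1 := by linear_combination μ * heq
  generalize deriv (fun t : ℝ => Φ (μ • y) (y + t • θ)) 0 = u1 at *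
  generalize deriv (deriv (fun t : ℝ => Φ (μ • y) (y + t • θ))) 0 = u2 at *
  refine ⟨?_, ?_⟩
  · linear_combination (1 + μ * a) * h1 - u1 * hA
  · have h3 : u2 * (1 + μ * a) = μ * u2 * P y * (1 + μ * a) +
        deriv (deriv fun t : ℝ => P (y + t • θ)) 0 := by
      have := hpos.ne'
      field_simp at h2
      linear_combination h2
    linear_combination h3 - u2 * hA

theorem stmt_15 (n : ℕ) (hn : 2 ≤ n)
    (Ω : Set (EuclideanSpace ℝ (Fin n)))
    (hΩopen : IsOpen Ω) (hΩconn : IsConnected Ω)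
    (hΩ0 : (0 : EuclideanSpace ℝ (Fin n)) ∈ Ω)
    (ψb φb : EuclideanSpace ℝ (Fin n) → ℝ)
    (hψhom : ∀ α : ℝ, 0 < α → ∀ y, ψb (α • y) = α * ψb y)
    (hφhom : ∀ α : ℝ, 0 < α → ∀ y, φb (α • y) = α * φb y)
    (hψsmooth : ContDiffOn ℝ (⊤ : ℕ∞) ψb {y | y ≠ 0})
    (hφsmooth : ContDiffOn ℝ (⊤ : ℕ∞) φb {y | y ≠ 0})
    (hψpos : ∀ y : EuclideanSpace ℝ (Fin n), y ≠ 0 → 0 < ψb y)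
    (hsumne : ∀ y : EuclideanSpace ℝ (Fin n), y ≠ 0 → φb y + ψb y ≠ 0)
    (hdiffne : ∀ y : EuclideanSpace ℝ (Fin n), y ≠ 0 → φb y - ψb y ≠ 0)
    (Φp Φm : EuclideanSpace ℝ (Fin n) → EuclideanSpace ℝ (Fin n) → ℝ)
    (hΦp : ∀ x ∈ Ω, ∀ y, Φp x y = φb (y + Φp x y • x) + ψb (y + Φp x y • x))
    (hΦpuniq : ∀ x ∈ Ω, ∀ y, ∀ t : ℝ, t = φb (y + t • x) + ψb (y + t • x) → t = Φp x y)
    (hΦm : ∀ x ∈ Ω, ∀ y, Φm x y = φb (y + Φm x y • x) - ψb (y + Φm x y • x))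
    (hΦmuniq : ∀ x ∈ Ω, ∀ y, ∀ t : ℝ, t = φb (y + t • x) - ψb (y + t • x) → t = Φm x y)
    (hΦpsmooth : ContDiffOn ℝ (⊤ : ℕ∞)
      (fun p : EuclideanSpace ℝ (Fin n) × EuclideanSpace ℝ (Fin n) => Φp p.1 p.2)
      (Ω ×ˢ {y | y ≠ 0}))
    (hΦmsmooth : ContDiffOn ℝ (⊤ : ℕ∞)
      (fun p : EuclideanSpace ℝ (Fin n) × EuclideanSpace ℝ (Fin n) => Φm p.1 p.2)
      (Ω ×ˢ {y | y ≠ 0})) :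
    ∀ y : EuclideanSpace ℝ (Fin n), y ≠ 0 →
      ((∀ θ : EuclideanSpace ℝ (Fin n), θ ≠ 0 →
          0 < iteratedFDeriv ℝ 2 (fun z => ψb z ^ 2) y ![θ, θ]) ↔
        (∀ μ : ℝ, μ • y ∈ Ω → ∀ θ : EuclideanSpace ℝ (Fin n), θ ≠ 0 →
          0 < iteratedFDeriv ℝ 2
            (fun z => ((Φp (μ • y) z - Φm (μ • y) z) / 2) ^ 2) y ![θ, θ])) := by
  intro y hy
  have hrank : 1 < Module.rank ℝ (EuclideanSpace ℝ (Fin n)) := by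
    rw [← Module.finrank_eq_rank, finrank_euclideanSpace_fin]
    exact_mod_cast hn
  have hψy : ContDiffAt ℝ 2 ψb y :=
    (hψsmooth.contDiffAt (isOpen_ne.mem_nhds hy)).of_le (WithTop.coe_le_coe.2 (le_top : (2 : ℕ∞) ≤ ⊤))
  constructor
  · intro ha μ hμ θ hθ
    obtain ⟨hA, hAe, hΦpy, hPy, hp⟩ := sol_aux hrank hΩopen (P := fun z => φb z + ψb z)
      (fun α h z => by simp only [hφhom α h, hψhom α h]; ring) (hφsmooth.add hψsmooth) hsumne Φp
      hΦp hΦpuniq hΦpsmooth y hy μ hμ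
    obtain ⟨hB, hBe, hΦmy, hMy, hm⟩ := sol_aux hrank hΩopen (P := fun z => φb z - ψb z)
      (fun α h z => by simp only [hφhom α h, hψhom α h]; ring) (hφsmooth.sub hψsmooth) hdiffne Φm
      hΦm hΦmuniq hΦmsmooth y hy μ hμ
    obtain ⟨hp1, hp2⟩ := hp θ
    obtain ⟨hm1, hm2⟩ := hm θ
    have hFcd : ContDiffAt ℝ 2 (fun z => (Φp (μ • y) z - Φm (μ • y) z) / 2) y :=
      (hΦpy.sub hΦmy).div_const 2
    rw [line_aux (f := fun z => ((Φp (μ • y) z - Φm (μ • y) z) / 2) ^ 2) (hFcd.pow 2),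
      sq_aux _ (line_cd hFcd θ)]
    obtain ⟨hF1, hF2⟩ := sub_aux _ _ (line_cd hΦpy θ) (line_cd hΦmy θ)
    obtain ⟨hψ1, hψ2⟩ := sub_aux _ _ (line_cd hPy θ) (line_cd hMy θ)
    have e : ∀ z, (φb z + ψb z - (φb z - ψb z)) / 2 = ψb z := fun z => by ring
    simp only [e] at hψ1 hψ2
    rw [hF1, hF2, hp2, hm2, ← hψ2, hp1, hm1]
    simp only [zero_smul, add_zero]
    have hψ0 := hψpos y hy
    have hF0 : 0 < (Φp (μ • y) y - Φm (μ • y) y) / 2 := by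
      generalize Φp (μ • y) y = a at *
      generalize Φm (μ • y) y = b at *
      have : (a - b) / 2 = (1 + μ * a) * (1 + μ * b) * ψb y := by
        linear_combination (1 + μ * b) / 2 * hAe - (1 + μ * a) / 2 * hBe
      rw [this]; positivity
    set c := deriv (fun t : ℝ => ψb (y + t • θ)) 0 / ψb y with hc
    have hθ' : θ = (θ - c • y) + c • y := by abel
    obtain ⟨hs1, hs2⟩ := shift_aux hψhom hψy θ _ c hθ'
    have hz : deriv (fun t : ℝ => ψb (y + t • (θ - c • y))) 0 = 0 := by
      have : c * ψb y = deriv (fun t : ℝ => ψb (y + t • θ)) 0 := by rw [hc]; field_simp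
      linarith
    by_cases h0 : θ - c • y = 0
    · rw [hs2]
      obtain ⟨hP1, -⟩ := shift_aux (P := fun z => φb z + ψb z)
        (fun α h z => by simp only [hφhom α h, hψhom α h]; ring) hPy θ _ c hθ'
      obtain ⟨hM1, -⟩ := shift_aux (P := fun z => φb z - ψb z)
        (fun α h z => by simp only [hφhom α h, hψhom α h]; ring) hMy θ _ c hθ'
      rw [hP1, hM1, h0]
      have hc0 : c ≠ 0 := by
        intro h
        rw [h] at h0
        simp at h0; exact hθ h0
      simp only [smul_zero, add_zero, deriv_const', deriv_const]
      have : ((1 + μ * Φp (μ • y) y) * (c * (φb y + ψb y)) -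
          (1 + μ * Φm (μ • y) y) * (c * (φb y - ψb y))) / 2
          = c * ((Φp (μ • y) y - Φm (μ • y) y) / 2) := by
        linear_combination -c / 2 * hAe + c / 2 * hBe
      rw [this]
      have : c * ((Φp (μ • y) y - Φm (μ • y) y) / 2) ≠ 0 := mul_ne_zero hc0 hF0.ne'
      positivity
    · have h1 := ha _ h0
      rw [line_aux (f := fun z => ψb z ^ 2) (hψy.pow 2), sq_aux _ (line_cd hψy _), hz, ← hs2] at h1
      simp only [zero_smul, add_zero] at h1
      have h2 : 0 < deriv (deriv fun t : ℝ => ψb (y + t • θ)) 0 := by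
        by_contra h'
        push Not at h'
        nlinarith
      positivity
  · intro hb θ hθ
    have h := hb 0 (by simpa using hΩ0) θ hθ
    have e : (fun z => ((Φp ((0:ℝ) • y) z - Φm ((0:ℝ) • y) z) / 2) ^ 2)
        = fun z => ψb z ^ 2 := by
      funext z
      have h1 := hΦp 0 hΩ0 z
      have h2 := hΦm 0 hΩ0 z
      simp only [smul_zero, add_zero] at h1 h2
      rw [zero_smul, h1, h2]
      ring
    rwa [e] at h
end
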